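/- arXiv:2007.05935 — 4 statements merged into one kernel-verified Lean document; each statement's English description precedes it below -/
import Mathlib

section
/- Assume (ℵ) ℵ_{ω+1} → (ω₁-st)²_{ℵ_ω,<ω₁}, i.e., for every f:[ℵ_{ω+1}]²→ℵ_ω there exists A⊆ℵ_{ω+1} of order type ω₁, stationary in sup A, with f''[A]² countable, and (ℶ) ω₁ →^poly (par(<ω₁))²_{<ω₁-t-bdd}. Then ℵ_{ω+1} →^poly (ω₁-st)²_{<ℵ_{ω+1}-t-bdd}: every normal <ℵ_{ω+1}-type bounded coloring f:[ℵ_{ω+1}]²→ℵ_{ω+1} admits an f-rainbow set of order type ω₁ that is stationary in its supremum. -/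
open Set Cardinal Ordinal

universe u

/-- `A` has order type `θ`: there is an order isomorphism from `Iio θ` onto `A`. -/
def HasOType (A : Set Ordinal.{u}) (θ : Ordinal.{u}) : Prop :=
  Nonempty (Set.Iio θ ≃o A)

/-- The order type of `A` is at most `γ`: `A` order-embeds into `Iio γ`. -/
def OTypeLE (A : Set Ordinal.{u}) (γ : Ordinal.{u}) : Prop :=
  Nonempty (A ↪o Set.Iio γ)

/-- `A` is `f`-rainbow: `f` is injective on increasing pairs from `A`. -/
def IsRainbow (f : Ordinal → Ordinal → Ordinal) (A : Set Ordinal) : Prop :=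
  ∀ α ∈ A, ∀ β ∈ A, ∀ γ ∈ A, ∀ δ ∈ A,
    α < β → γ < δ → f α β = f γ δ → α = γ ∧ β = δ

/-- `f` is a normal coloring on pairs below `κ`: equal colors force equal top points. -/
def IsNormalColoring (f : Ordinal → Ordinal → Ordinal) (κ : Ordinal) : Prop :=
  ∀ α β γ δ : Ordinal, α < β → β < κ → γ < δ → δ < κ → f α β = f γ δ → β = δ

/-- `f` is 2-bounded: every fiber of `f` on pairs below `κ` has at most two elements. -/
def TwoBounded (f : Ordinal → Ordinal → Ordinal) (κ : Ordinal) : Prop :=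
  ∀ ξ : Ordinal, {p : Ordinal × Ordinal | p.1 < p.2 ∧ p.2 < κ ∧ f p.1 p.2 = ξ}.encard ≤ 2

/-- `f` is `<ω`-bounded: every fiber of `f` on pairs below `κ` is finite. -/
def FinBounded (f : Ordinal → Ordinal → Ordinal) (κ : Ordinal) : Prop :=
  ∀ ξ : Ordinal, {p : Ordinal × Ordinal | p.1 < p.2 ∧ p.2 < κ ∧ f p.1 p.2 = ξ}.Finite

/-- `f` is `ω`-bounded: every fiber of `f` on pairs below `κ` is countable. -/
def OmegaBounded (f : Ordinal → Ordinal → Ordinal) (κ : Ordinal) : Prop :=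
  ∀ ξ : Ordinal, {p : Ordinal × Ordinal | p.1 < p.2 ∧ p.2 < κ ∧ f p.1 p.2 = ξ}.Countable

/-- `A` is a closed set of ordinals: any nonzero `α` below `sup A` which is the
supremum of the elements of `A` below it belongs to `A`. -/
def IsClosedSet (A : Set Ordinal) : Prop :=
  ∀ α : Ordinal, α < sSup A → α ≠ 0 → sSup (A ∩ Set.Iio α) = α → α ∈ A

/-- `C` is club in `δ`: a subset of `δ`, unbounded in `δ`, and closed below `δ`. -/
def IsClubIn (C : Set Ordinal) (δ : Ordinal) : Prop :=
  C ⊆ Set.Iio δ ∧ (∀ α < δ, ∃ β ∈ C, α ≤ β) ∧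
  ∀ α : Ordinal, α < δ → α ≠ 0 → sSup (C ∩ Set.Iio α) = α → α ∈ C

/-- `A` is stationary in `δ`: it meets every club in `δ`. -/
def IsStationaryIn (A : Set Ordinal) (δ : Ordinal) : Prop :=
  ∀ C : Set Ordinal, IsClubIn C δ → (A ∩ C).Nonempty

/-- `f` is `<bd`-type bounded on pairs below `κ`: some `γ < bd` bounds the order
type of every color class `t_{ηβ} = {ξ < β | f ξ β = f η β}`. -/
def TypeBounded (f : Ordinal → Ordinal → Ordinal) (κ bd : Ordinal) : Prop :=
  ∃ γ < bd, ∀ η β : Ordinal, η < β → β < κ →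
    OTypeLE {ξ : Ordinal | ξ < β ∧ f ξ β = f η β} γ

/-- `f` is `<bd`-type bounded relative to the set `A`. -/
def TypeBoundedOn (f : Ordinal → Ordinal → Ordinal) (A : Set Ordinal) (bd : Ordinal) : Prop :=
  ∃ γ < bd, ∀ η ∈ A, ∀ β ∈ A, η < β →
    OTypeLE {ξ : Ordinal | ξ ∈ A ∧ ξ < β ∧ f ξ β = f η β} γ

/-- Universe-free version of having order type `ω₁`. -/
def Om1 (A : Set Ordinal.{u}) : Prop :=
  ¬ A.Countable ∧ ∀ a ∈ A, (A ∩ Iio a).Countable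

theorem countable_Iio_iff (o : Ordinal.{u}) : (Iio o).Countable ↔ o < (Cardinal.aleph 1).ord := by
  rw [← Cardinal.le_aleph0_iff_set_countable, Cardinal.mk_Iio_ordinal, Cardinal.lt_ord,
    Cardinal.lt_aleph_one_iff, Cardinal.lift_le_aleph0]

theorem om1_Iio : Om1 (Iio (Cardinal.aleph 1).ord : Set Ordinal.{u}) := by
  refine ⟨fun h => ?_, fun a ha => ?_⟩
  · rw [countable_Iio_iff] at h
    exact lt_irrefl _ h
  · exact ((countable_Iio_iff a).2 ha).mono inter_subset_right

universe v w

/-- no principal embedding -/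
theorem om1_no_principal {A : Set Ordinal.{u}} {B : Set Ordinal.{v}} (hA : ¬ A.Countable)
    (hB : Om1 B)
    (f : PrincipalSeg (α := A) (β := B) (· < ·) (· < ·)) : False := by
  apply hA
  have h1 : (B ∩ Iio (f.top : Ordinal)).Countable := hB.2 _ f.top.2
  rw [← Set.countable_coe_iff] at h1 ⊢
  let k : A → (B ∩ Iio (f.top : Ordinal) : Set Ordinal) :=
    fun a => ⟨(f a : Ordinal), (f a).2, f.lt_top a⟩
  refine Function.Injective.countable (f := k) ?_
  intro a b hab
  apply f.injective
  have := congrArg Subtype.val hab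
  exact Subtype.ext this

theorem om1_iso {A : Set Ordinal.{u}} {B : Set Ordinal.{v}} (hA : Om1 A) (hB : Om1 B) :
    Nonempty (A ≃o B) := by
  rcases InitialSeg.total (α := A) (β := B) (· < ·) (· < ·) with f | f
  · rcases f.principalSumRelIso with g | g
    · exact (om1_no_principal hA.1 hB g).elim
    · exact ⟨OrderIso.ofRelIsoLT g⟩
  · rcases f.principalSumRelIso with g | g
    · exact (om1_no_principal hB.1 hA g).elim
    · exact ⟨(OrderIso.ofRelIsoLT g).symm⟩

theorem hasOType_of_om1 {A : Set Ordinal.{u}} (hA : Om1 A) :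
    HasOType A (Cardinal.aleph 1).ord := om1_iso om1_Iio hA

theorem om1_of_hasOType {A : Set Ordinal.{u}} (hA : HasOType A (Cardinal.aleph 1).ord) :
    Om1 A := by
  obtain ⟨e⟩ := hA
  refine ⟨fun h => om1_Iio.1 ?_, fun a ha => ?_⟩
  · rw [← Set.countable_coe_iff] at h ⊢
    exact e.injective.countable
  · have h1 := om1_Iio.2 _ (e.symm ⟨a, ha⟩).2
    rw [← Set.countable_coe_iff] at h1 ⊢
    let k : (A ∩ Iio a : Set Ordinal) →
        (Iio (Cardinal.aleph 1).ord ∩ Iio (e.symm ⟨a, ha⟩ : Ordinal) : Set Ordinal) :=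
      fun x => ⟨(e.symm ⟨x, x.2.1⟩ : Ordinal), (e.symm ⟨x, x.2.1⟩).2,
        e.symm.strictMono (show (⟨x, x.2.1⟩ : A) < ⟨a, ha⟩ from x.2.2)⟩
    refine Function.Injective.countable (f := k) ?_
    intro x y hxy
    have h2 := congrArg Subtype.val hxy
    have h3 := e.symm.injective (Subtype.ext h2)
    exact Subtype.ext (Subtype.mk.inj h3)

/-- A countable set of ordinals embeds in a countable ordinal of any universe. -/
theorem countable_emb {D : Set Ordinal.{u}} (hD : D.Countable) :
    ∃ γ : Ordinal.{v}, γ < (Cardinal.aleph 1).ord ∧ ∃ m : Ordinal.{u} → Ordinal.{v},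
      (∀ x ∈ D, m x < γ) ∧ StrictMonoOn m D := by
  classical
  have key : PrincipalSeg (α := D) (β := (Iio (Cardinal.aleph 1).ord : Set Ordinal.{v}))
      (· < ·) (· < ·) := by
    apply Classical.choice
    rcases InitialSeg.total (α := D) (β := (Iio (Cardinal.aleph 1).ord : Set Ordinal.{v}))
      (· < ·) (· < ·) with f | f
    · rcases f.principalSumRelIso with g | g
      · exact ⟨g⟩
      · exfalso
        apply (om1_Iio.{v}).1
        rw [← Set.countable_coe_iff] at hD ⊢
        exact g.symm.injective.countable
    · exfalso
      apply (om1_Iio.{v}).1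
      rw [← Set.countable_coe_iff] at hD ⊢
      exact f.injective.countable
  refine ⟨key.top, key.top.2, fun x => if h : x ∈ D then (key ⟨x, h⟩ : Ordinal) else 0, ?_, ?_⟩
  · intro x hx
    simp only [hx, dif_pos]
    exact key.lt_top _
  · intro x hx y hy hxy
    simp only [hx, hy, dif_pos]
    exact key.map_rel_iff.2 (show (⟨x, hx⟩ : D) < ⟨y, hy⟩ from hxy)

/-- Transfer between universes. -/
theorem transfer (a : Ordinal.{u}) (b : Ordinal.{v})
    (h : Ordinal.lift.{v} a = Ordinal.lift.{u} b) :
    ∃ (T : Ordinal.{u} → Ordinal.{v}) (S : Ordinal.{v} → Ordinal.{u}),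
      (∀ x < a, T x < b ∧ S (T x) = x) ∧ (∀ y < b, S y < a ∧ T (S y) = y) ∧
      (∀ x < a, ∀ y < a, T x < T y ↔ x < y) := by
  classical
  have h1 : ∀ x : Ordinal.{u}, ∃ y : Ordinal.{v}, x < a →
      Ordinal.lift.{u} y = Ordinal.lift.{v} x := by
    intro x
    by_cases hx : x < a
    · have : Ordinal.lift.{v} x ≤ Ordinal.lift.{u} b := by
        rw [← h]; exact Ordinal.lift_le.2 hx.le
      obtain ⟨y, hy⟩ := Ordinal.mem_range_lift_of_le this
      exact ⟨y, fun _ => hy⟩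
    · exact ⟨0, fun h => (hx h).elim⟩
  have h2 : ∀ y : Ordinal.{v}, ∃ x : Ordinal.{u}, y < b →
      Ordinal.lift.{v} x = Ordinal.lift.{u} y := by
    intro x
    by_cases hx : x < b
    · have : Ordinal.lift.{u} x ≤ Ordinal.lift.{v} a := by
        rw [h]; exact Ordinal.lift_le.2 hx.le
      obtain ⟨y, hy⟩ := Ordinal.mem_range_lift_of_le this
      exact ⟨y, fun _ => hy⟩
    · exact ⟨0, fun h => (hx h).elim⟩
  choose T hT using h1
  choose S hS using h2
  have hTb : ∀ x < a, T x < b := by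
    intro x hx
    rw [← Ordinal.lift_lt.{u}, hT x hx, ← h, Ordinal.lift_lt]
    exact hx
  have hSa : ∀ x < b, S x < a := by
    intro x hx
    rw [← Ordinal.lift_lt.{v}, hS x hx, h, Ordinal.lift_lt]
    exact hx
  refine ⟨T, S, fun x hx => ⟨hTb x hx, ?_⟩, fun y hy => ⟨hSa y hy, ?_⟩, ?_⟩
  · rw [← Ordinal.lift_inj.{v}, hS _ (hTb x hx), hT x hx]
  · rw [← Ordinal.lift_inj.{u}, hT _ (hSa y hy), hS y hy]
  · intro x hx y hy
    rw [← Ordinal.lift_lt.{u}, hT x hx, hT y hy, Ordinal.lift_lt]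

theorem sSup_limit_iff {C : Set Ordinal.{u}} {α : Ordinal.{u}} :
    sSup (C ∩ Iio α) = α ↔ ∀ x < α, ∃ c ∈ C, x < c ∧ c < α := by
  have hb : BddAbove (C ∩ Iio α) := ⟨α, fun x hx => le_of_lt hx.2⟩
  constructor
  · intro h x hx
    rw [← h, lt_csSup_iff' hb] at hx
    obtain ⟨c, hc, hxc⟩ := hx
    exact ⟨c, hc.1, hxc, hc.2⟩
  · intro h
    apply le_antisymm
    · exact csSup_le' fun x hx => le_of_lt hx.2
    · by_contra hlt
      rw [not_le] at hlt
      obtain ⟨c, hc, h1, h2⟩ := h _ hlt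
      exact absurd (le_csSup hb ⟨hc, h2⟩) (not_le.2 h1)

theorem stationary_transfer {A₁ : Set Ordinal.{u}} {a : Ordinal.{u}} {b : Ordinal.{v}}
    {T : Ordinal.{u} → Ordinal.{v}} {S : Ordinal.{v} → Ordinal.{u}}
    (hT : ∀ x < a, T x < b ∧ S (T x) = x) (hS : ∀ y < b, S y < a ∧ T (S y) = y)
    (hlt : ∀ x < a, ∀ y < a, T x < T y ↔ x < y) (hA : A₁ ⊆ Iio a)
    (hst : IsStationaryIn A₁ (sSup A₁)) : IsStationaryIn (T '' A₁) (sSup (T '' A₁)) := by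
  have hSlt : ∀ x < b, ∀ y < b, S x < S y ↔ x < y := by
    intro x hx y hy
    rw [← hlt _ (hS x hx).1 _ (hS y hy).1, (hS x hx).2, (hS y hy).2]
  have hb1 : BddAbove A₁ := ⟨a, fun x hx => le_of_lt (hA hx)⟩
  have hTA : T '' A₁ ⊆ Iio b := by
    rintro _ ⟨x, hx, rfl⟩
    exact (hT x (hA hx)).1
  have hb2 : BddAbove (T '' A₁) := ⟨b, fun x hx => le_of_lt (hTA hx)⟩
  intro C hC
  obtain ⟨hCs, hCu, hCc⟩ := hC
  have hCb : ∀ c ∈ C, c < b := by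
    intro c hc
    have := hCs hc
    rw [mem_Iio, lt_csSup_iff' hb2] at this
    obtain ⟨x, hx, h⟩ := this
    exact h.trans (hTA hx)
  have hclub : IsClubIn (S '' C) (sSup A₁) := by
    refine ⟨?_, ?_, ?_⟩
    · rintro _ ⟨c, hc, rfl⟩
      have := hCs hc
      rw [mem_Iio, lt_csSup_iff' hb2] at this
      obtain ⟨_, ⟨x, hx, rfl⟩, h⟩ := this
      rw [mem_Iio, lt_csSup_iff' hb1]
      refine ⟨x, hx, ?_⟩
      rwa [← hlt _ (hS c (hCb c hc)).1 _ (hA hx), (hS c (hCb c hc)).2]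
    · intro x hx
      rw [lt_csSup_iff' hb1] at hx
      obtain ⟨y, hy, hxy⟩ := hx
      have hxa : x < a := hxy.trans (hA hy)
      have : T x < sSup (T '' A₁) := by
        rw [lt_csSup_iff' hb2]
        exact ⟨T y, ⟨y, hy, rfl⟩, (hlt x hxa y (hA hy)).2 hxy⟩
      obtain ⟨c, hc, hxc⟩ := hCu _ this
      refine ⟨S c, ⟨c, hc, rfl⟩, ?_⟩
      rw [← not_lt] at hxc ⊢
      intro h
      apply hxc
      rwa [← hlt _ (hS c (hCb c hc)).1 _ hxa, (hS c (hCb c hc)).2] at h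
    · intro x hx hx0 hlim
      rw [sSup_limit_iff] at hlim
      rw [lt_csSup_iff' hb1] at hx
      obtain ⟨y, hy, hxy⟩ := hx
      have hxa : x < a := hxy.trans (hA hy)
      refine ⟨T x, ?_, (hT x hxa).2⟩
      apply hCc
      · rw [lt_csSup_iff' hb2]
        exact ⟨T y, ⟨y, hy, rfl⟩, (hlt x hxa y (hA hy)).2 hxy⟩
      · have h0 : 0 < x := pos_iff_ne_zero.2 hx0
        have := (hlt 0 (h0.trans hxa) x hxa).2 h0
        exact (lt_of_le_of_lt bot_le this).ne'
      · rw [sSup_limit_iff]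
        intro z hz
        have hzb : z < b := hz.trans (hT x hxa).1
        have : S z < x := by
          rwa [← (hT x hxa).2, hSlt _ hzb _ (hT x hxa).1]
        obtain ⟨_, ⟨c, hc, rfl⟩, h1, h2⟩ := hlim _ this
        refine ⟨c, hc, (hSlt _ hzb _ (hCb c hc)).1 h1, ?_⟩
        rw [← hSlt _ (hCb c hc) _ (hT x hxa).1, (hT x hxa).2]
        exact h2
  obtain ⟨x, hxA, c, hc, rfl⟩ := hst _ hclub
  exact ⟨T (S c), ⟨S c, hxA, rfl⟩, by rw [(hS c (hCb c hc)).2]; exact hc⟩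

theorem om1_transfer {A₁ : Set Ordinal.{u}} {a : Ordinal.{u}}
    {T : Ordinal.{u} → Ordinal.{v}}
    (hlt : ∀ x < a, ∀ y < a, T x < T y ↔ x < y) (hA : A₁ ⊆ Iio a)
    (h : Om1 A₁) : Om1 (T '' A₁) := by
  have hinj : InjOn T A₁ := by
    intro x hx y hy hxy
    apply le_antisymm
    · exact not_lt.1 fun h => ((hlt _ (hA hy) _ (hA hx)).2 h).ne' hxy
    · exact not_lt.1 fun h => ((hlt _ (hA hx) _ (hA hy)).2 h).ne hxy
  refine ⟨fun hc => h.1 (Set.countable_of_injective_of_countable_image hinj hc), ?_⟩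
  rintro _ ⟨x, hx, rfl⟩
  refine ((h.2 x hx).image T).mono ?_
  rintro _ ⟨⟨y, hy, rfl⟩, hyx⟩
  exact ⟨y, ⟨hy, (hlt _ (hA hy) _ (hA hx)).1 hyx⟩, rfl⟩

theorem om1_bound {A s : Set Ordinal.{u}} (hA : Om1 A) (hs : s.Countable)
    (hsA : ∀ x ∈ s, x < sSup A) (hb : BddAbove A) : ∃ a ∈ A, a < sSup A ∧ ∀ x ∈ s, x < a := by
  have main : ∀ s : Set Ordinal.{u}, s.Countable → s ⊆ A → ∃ a ∈ A, ∀ x ∈ s, x < a := by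
    intro s hs hsA
    by_contra hcon
    push Not at hcon
    apply hA.1
    refine (Set.Countable.biUnion hs (t := fun x _ => (A ∩ Iio x) ∪ {x})
      (fun x hx => (hA.2 x (hsA hx)).union (countable_singleton x))).mono ?_
    intro a ha
    obtain ⟨x, hx, h⟩ := hcon a ha
    refine mem_biUnion hx ?_
    rcases h.lt_or_eq with h | h
    · exact Or.inl ⟨ha, h⟩
    · exact Or.inr h
  have h1 : ∀ x, ∃ y, x ∈ s → y ∈ A ∧ x < y := by
    intro x
    by_cases hx : x ∈ s
    · obtain ⟨y, hy⟩ := (lt_csSup_iff' hb).1 (hsA x hx)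
      exact ⟨y, fun _ => hy⟩
    · exact ⟨0, fun h => (hx h).elim⟩
  choose k hk using h1
  obtain ⟨a, ha, h⟩ := main (k '' s) (hs.image k) (by rintro _ ⟨x, hx, rfl⟩; exact (hk x hx).1)
  obtain ⟨a', ha', h'⟩ := main {a} (countable_singleton a) (by simpa using ha)
  exact ⟨a, ha, (h' a rfl).trans_le (le_csSup hb ha'),
    fun x hx => (hk x hx).2.trans (h _ ⟨x, hx, rfl⟩)⟩

theorem club_iInter {A : Set Ordinal.{u}} (hA : Om1 A) (hb : BddAbove A)
    {ι : Type w} [Countable ι] [Nonempty ι] (C : ι → Set Ordinal.{u})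
    (hC : ∀ i, IsClubIn (C i) (sSup A)) : IsClubIn (⋂ i, C i) (sSup A) := by
  refine ⟨?_, ?_, ?_⟩
  · exact (iInter_subset _ (Classical.arbitrary ι)).trans (hC _).1
  · intro α hα
    have step : ∀ x : Ordinal.{u}, ∃ y, x < sSup A → y < sSup A ∧ x < y ∧
        ∀ i, ∃ c ∈ C i, x < c ∧ c < y := by
      intro x
      by_cases hx : x < sSup A
      · obtain ⟨x', hx'A, hx', hxx'⟩ := om1_bound hA (countable_singleton x)
          (by simpa using hx) hb
        have hxx' : x < x' := hxx' x rfl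
        have : ∀ i, ∃ c ∈ C i, x' ≤ c := fun i => (hC i).2.1 x' hx'
        choose c hc hxc using this
        obtain ⟨y, hyA, hy, h⟩ := om1_bound hA (countable_range c)
          (by rintro _ ⟨i, rfl⟩; exact (hC i).1 (hc i)) hb
        have h' : ∀ i, c i < y := fun i => h _ ⟨i, rfl⟩
        exact ⟨y, fun _ => ⟨hy, (hxx'.trans_le (hxc (Classical.arbitrary ι))).trans (h' _),
          fun i => ⟨c i, hc i, hxx'.trans_le (hxc i), h' i⟩⟩⟩
      · exact ⟨0, fun h => (hx h).elim⟩
    choose k hk using step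
    let x : ℕ → Ordinal.{u} := fun n => k^[n] α
    have hxs : ∀ n, x (n+1) = k (x n) := fun n => Function.iterate_succ_apply' k n α
    have hx : ∀ n, x n < sSup A := by
      intro n
      induction n with
      | zero => exact hα
      | succ n ih => rw [hxs]; exact (hk _ ih).1
    obtain ⟨z, hzA, hz, hxz⟩ := om1_bound hA (countable_range x)
      (by rintro _ ⟨i, rfl⟩; exact hx i) hb
    have hbx : BddAbove (range x) := ⟨z, fun y hy => (hxz y hy).le⟩
    have hlt : ∀ n, x n < sSup (range x) := fun n =>
      ((hk _ (hx n)).2.1).trans_le (hxs n ▸ le_csSup hbx ⟨n+1, rfl⟩)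
    refine ⟨sSup (range x), mem_iInter.2 fun i => ?_, (hlt 0).le⟩
    apply (hC i).2.2
    · exact (csSup_le' fun y hy => (hxz y hy).le).trans_lt hz
    · exact (lt_of_le_of_lt bot_le (hlt 0)).ne'
    · rw [sSup_limit_iff]
      intro y hy
      rw [lt_csSup_iff' hbx] at hy
      obtain ⟨_, ⟨n, rfl⟩, hy⟩ := hy
      obtain ⟨c, hc, h1, h2⟩ := (hk _ (hx n)).2.2 i
      refine ⟨c, hc, hy.trans h1, ?_⟩
      rw [← hxs] at h2
      exact h2.trans (hlt _)
  · intro α hα h0 hlim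
    rw [sSup_limit_iff] at hlim
    refine mem_iInter.2 fun i => (hC i).2.2 α hα h0 ?_
    rw [sSup_limit_iff]
    intro x hx
    obtain ⟨c, hc, h⟩ := hlim x hx
    exact ⟨c, mem_iInter.1 hc i, h⟩

theorem club_tail {A : Set Ordinal.{u}} (hA : Om1 A) (hb : BddAbove A) {b : Ordinal.{u}}
    (h : b < sSup A) : IsClubIn (Ioo b (sSup A)) (sSup A) := by
  refine ⟨fun x hx => hx.2, ?_, ?_⟩
  · intro α hα
    obtain ⟨y, _, hy, hy'⟩ := om1_bound hA (s := {b, α}) (by simp)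
      (by rintro x (rfl | rfl) <;> assumption) hb
    exact ⟨y, ⟨hy' b (by simp), hy⟩, (hy' α (by simp)).le⟩
  · intro α hα h0 hlim
    rw [sSup_limit_iff] at hlim
    obtain ⟨c, hc, h1, h2⟩ := hlim 0 (pos_iff_ne_zero.2 h0)
    exact ⟨hc.1.trans h2, hα⟩

theorem pigeon {A : Set Ordinal.{u}} (hA : Om1 A) (hb : BddAbove A)
    (hst : IsStationaryIn A (sSup A))
    {ι : Type w} [Countable ι] (B : ι → Set Ordinal.{u})
    (hBA : ∀ i, B i ⊆ A) (hAB : A ⊆ ⋃ i, B i) :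
    ∃ i, Om1 (B i) ∧ IsStationaryIn (B i) (sSup (B i)) := by
  have hne : A.Nonempty := by
    by_contra h
    rw [not_nonempty_iff_eq_empty] at h
    exact hA.1 (h ▸ countable_empty)
  have : Nonempty ι := by
    obtain ⟨a, ha⟩ := hne
    obtain ⟨i, _⟩ := mem_iUnion.1 (hAB ha)
    exact ⟨i⟩
  have h1 : ∃ i, IsStationaryIn (B i) (sSup A) := by
    by_contra hcon
    simp only [IsStationaryIn] at hcon
    push Not at hcon
    choose C hC hBC using hcon
    obtain ⟨a, ha, haC⟩ := hst _ (club_iInter hA hb C hC)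
    obtain ⟨i, hi⟩ := mem_iUnion.1 (hAB ha)
    have : a ∈ B i ∩ C i := ⟨hi, mem_iInter.1 haC i⟩
    rw [hBC] at this
    exact this
  obtain ⟨i, hi⟩ := h1
  have hbB : BddAbove (B i) := hb.mono (hBA i)
  have hsup : sSup (B i) = sSup A := by
    apply le_antisymm (csSup_le_csSup' hb (hBA i))
    by_contra h
    obtain ⟨x, hx, hx'⟩ := hi _ (club_tail hA hb (not_le.1 h))
    exact absurd (le_csSup hbB hx) (not_le.2 hx'.1)
  refine ⟨i, ⟨fun hc => ?_, fun a ha => (hA.2 a (hBA i ha)).mono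
    (inter_subset_inter_left _ (hBA i))⟩, hsup ▸ hi⟩
  have hlt : ∀ x ∈ A, x < sSup A := by
    intro x hx
    by_contra h
    apply hA.1
    refine ((hA.2 x hx).union (countable_singleton x)).mono fun y hy => ?_
    rcases ((le_csSup hb hy).trans (not_lt.1 h)).lt_or_eq with h | h
    · exact Or.inl ⟨hy, h⟩
    · exact Or.inr h
  obtain ⟨b, _, hb', h⟩ := om1_bound hA hc (fun x hx => hlt x (hBA i hx)) hb
  obtain ⟨x, hx, hx'⟩ := hi _ (club_tail hA hb hb')
  exact lt_asymm hx'.1 (h x hx)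

theorem exists_F (γ : Ordinal.{u}) : ∃ F : Set Ordinal.{u} → Ordinal.{u} → Ordinal.{u},
    ∀ t, OTypeLE t γ → (∀ x ∈ t, F t x < γ) ∧ StrictMonoOn (F t) t := by
  classical
  refine ⟨fun t x => if h : OTypeLE t γ ∧ x ∈ t then (Classical.choice h.1 ⟨x, h.2⟩ : Ordinal)
    else 0, fun t ht => ⟨fun x hx => ?_, fun x hx y hy hxy => ?_⟩⟩
  · have h : OTypeLE t γ ∧ x ∈ t := ⟨ht, hx⟩
    simp only [h, and_self, dite_true]
    exact (Classical.choice ht ⟨x, hx⟩).2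
  · have h : OTypeLE t γ ∧ x ∈ t := ⟨ht, hx⟩
    have h' : OTypeLE t γ ∧ y ∈ t := ⟨ht, hy⟩
    simp only [h, h', and_self, dite_true]
    exact (Classical.choice ht).strictMono (show (⟨x, hx⟩ : t) < ⟨y, hy⟩ from hxy)

theorem exists_e (γ : Ordinal.{u}) (hγ : γ < (Cardinal.aleph (Ordinal.omega0 + 1)).ord) :
    ∃ e : Ordinal.{u} → Ordinal.{v}, (∀ x < γ, e x < (Cardinal.aleph Ordinal.omega0).ord) ∧
      InjOn e (Iio γ) := by
  classical
  have h : γ.card ≤ Cardinal.aleph Ordinal.omega0 := by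
    rw [Cardinal.lt_ord, ← Cardinal.succ_aleph, Order.lt_succ_iff] at hγ
    exact hγ
  have h2 : Nonempty (Iio γ ↪ (Iio (Cardinal.aleph Ordinal.omega0).ord : Set Ordinal.{v})) := by
    rw [← Cardinal.lift_mk_le', Cardinal.mk_Iio_ordinal, Cardinal.mk_Iio_ordinal,
      Cardinal.card_ord]
    have := (Cardinal.lift_le.{max (u+1) (v+1)}).2 h
    simpa using this
  obtain ⟨k⟩ := h2
  refine ⟨fun x => if h : x < γ then (k ⟨x, h⟩ : Ordinal) else 0, fun x hx => ?_,
    fun x hx y hy hxy => ?_⟩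
  · simp only [hx, dite_true]
    exact (k ⟨x, hx⟩).2
  · have hx' : x < γ := hx
    have hy' : y < γ := hy
    simp only [hx', hy', dite_true] at hxy
    exact Subtype.mk.inj (k.injective (Subtype.ext hxy))

/-- Recoding the colors of pairs from `A`. -/
theorem exists_code {A : Set Ordinal.{u}} (hA : Om1 A)
    (f : Ordinal.{u} → Ordinal.{u} → Ordinal.{w}) :
    ∃ code : Ordinal.{w} → Ordinal.{v}, (∀ c, code c < (Cardinal.aleph 1).ord) ∧
      ∀ α ∈ A, ∀ β ∈ A, ∀ γ ∈ A, ∀ δ ∈ A, code (f α β) = code (f γ δ) → f α β = f γ δ := by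
  classical
  have h2 : Nonempty ((A × A) ↪ (Iio (Cardinal.aleph 1).ord : Set Ordinal.{v})) := by
    obtain ⟨e⟩ := om1_iso hA om1_Iio.{u}
    have h3 : #A = Cardinal.aleph 1 := by
      rw [Cardinal.mk_congr e.toEquiv, Cardinal.mk_Iio_ordinal, Cardinal.card_ord]
      simp
    have h4 : #(A × A) = Cardinal.aleph 1 := by
      rw [Cardinal.mk_prod, h3, Cardinal.lift_id, Cardinal.mul_eq_self (Cardinal.aleph0_le_aleph 1)]
    rw [← Cardinal.lift_mk_le', h4, Cardinal.mk_Iio_ordinal, Cardinal.card_ord]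
    simp
  obtain ⟨k⟩ := h2
  refine ⟨fun c => if h : ∃ p : A × A, f p.1 p.2 = c then (k h.choose : Ordinal) else 0,
    fun c => ?_, fun α hα β hβ γ hγ δ hδ h => ?_⟩
  · dsimp only
    split_ifs with h
    · exact (k h.choose).2
    · rw [Cardinal.lt_ord]
      simp
  · have h1 : ∃ p : A × A, f p.1 p.2 = f α β := ⟨(⟨α, hα⟩, ⟨β, hβ⟩), rfl⟩
    have h2 : ∃ p : A × A, f p.1 p.2 = f γ δ := ⟨(⟨γ, hγ⟩, ⟨δ, hδ⟩), rfl⟩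
    simp only [h1, h2, dite_true] at h
    have h3 := k.injective (Subtype.ext h)
    rw [← h1.choose_spec, ← h2.choose_spec, h3]

theorem exists_J {A : Set Ordinal.{u}} (hA : Om1 A) :
    ∃ J : Ordinal.{v} → Ordinal.{u}, (∀ x < (Cardinal.aleph 1).ord, J x ∈ A) ∧
      (∀ a ∈ A, ∃ x < (Cardinal.aleph 1).ord, J x = a) ∧
      StrictMonoOn J (Iio (Cardinal.aleph 1).ord) := by
  classical
  obtain ⟨e⟩ := om1_iso om1_Iio.{v} hA
  refine ⟨fun x => if h : x < (Cardinal.aleph 1).ord then (e ⟨x, h⟩ : Ordinal) else 0,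
    fun x hx => ?_, fun a ha => ?_, fun x hx y hy hxy => ?_⟩
  · simp only [hx, dite_true]
    exact (e ⟨x, hx⟩).2
  · have h : (e.symm ⟨a, ha⟩ : Ordinal) < (Cardinal.aleph 1).ord := (e.symm ⟨a, ha⟩).2
    refine ⟨e.symm ⟨a, ha⟩, h, ?_⟩
    simp only [h, dite_true]
    exact congrArg Subtype.val (e.apply_symm_apply ⟨a, ha⟩)
  · have hx' : x < (Cardinal.aleph 1).ord := hx
    have hy' : y < (Cardinal.aleph 1).ord := hy
    simp only [hx', hy', dite_true]
    exact e.strictMono (show (⟨x, hx⟩ : Iio (Cardinal.aleph 1).ord) < ⟨y, hy⟩ from hxy)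

/-- Corollary (thmsing): assume `(ℵ)`: every `f : [ℵ_{ω+1}]² → ℵ_ω` admits a subset of
order type `ω₁`, stationary in its supremum, with countable color image; and `(ℶ)`:
`ω₁ →^poly (par(<ω₁))²_{<ω₁-t-bdd}`. Then
`ℵ_{ω+1} →^poly (ω₁-st)²_{<ℵ_{ω+1}-t-bdd}`. -/
theorem stmt8
    (haleph : ∀ f : Ordinal → Ordinal → Ordinal,
      (∀ α β : Ordinal, α < β → β < (Cardinal.aleph (Ordinal.omega0 + 1)).ord →
        f α β < (Cardinal.aleph Ordinal.omega0).ord) →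
      ∃ A : Set Ordinal, A ⊆ Set.Iio (Cardinal.aleph (Ordinal.omega0 + 1)).ord ∧
        HasOType A (Cardinal.aleph 1).ord ∧ IsStationaryIn A (sSup A) ∧
        {ξ : Ordinal | ∃ α ∈ A, ∃ β ∈ A, α < β ∧ f α β = ξ}.Countable)
    (hbeth : ∀ f : Ordinal → Ordinal → Ordinal,
      (∀ α β : Ordinal, α < β → β < (Cardinal.aleph 1).ord → f α β < (Cardinal.aleph 1).ord) →
      IsNormalColoring f (Cardinal.aleph 1).ord →
      TypeBounded f (Cardinal.aleph 1).ord (Cardinal.aleph 1).ord →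
      ∃ γ : Ordinal, γ < (Cardinal.aleph 1).ord ∧ ∃ g : Ordinal → Ordinal,
        (∀ ξ : Ordinal, ξ < (Cardinal.aleph 1).ord → g ξ < γ) ∧
        ∀ i : Ordinal, i < γ →
          IsRainbow f {ξ : Ordinal | ξ < (Cardinal.aleph 1).ord ∧ g ξ = i}) :
    ∀ f : Ordinal → Ordinal → Ordinal,
      (∀ α β : Ordinal, α < β → β < (Cardinal.aleph (Ordinal.omega0 + 1)).ord →
        f α β < (Cardinal.aleph (Ordinal.omega0 + 1)).ord) →
      IsNormalColoring f (Cardinal.aleph (Ordinal.omega0 + 1)).ord →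
      TypeBounded f (Cardinal.aleph (Ordinal.omega0 + 1)).ord
        (Cardinal.aleph (Ordinal.omega0 + 1)).ord →
      ∃ A : Set Ordinal, A ⊆ Set.Iio (Cardinal.aleph (Ordinal.omega0 + 1)).ord ∧
        HasOType A (Cardinal.aleph 1).ord ∧ IsStationaryIn A (sSup A) ∧ IsRainbow f A := by
  intro f _ hnorm htb
  obtain ⟨γ, hγ, htb⟩ := htb
  obtain ⟨F, hF⟩ := exists_F γ
  obtain ⟨e, he, hei⟩ := exists_e γ hγ
  obtain ⟨T, S, hT, hS, hlt⟩ := transfer (Cardinal.aleph (Ordinal.omega0 + 1)).ord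
    (Cardinal.aleph (Ordinal.omega0 + 1)).ord (by simp)
  -- the derived coloring
  let t : Ordinal → Ordinal → Set Ordinal := fun η β => {ξ | ξ < β ∧ f ξ β = f η β}
  have hFt : ∀ η β, η < β → β < (Cardinal.aleph (Ordinal.omega0 + 1)).ord →
      (∀ x ∈ t η β, F (t η β) x < γ) ∧ StrictMonoOn (F (t η β)) (t η β) :=
    fun η β h1 h2 => hF _ (htb η β h1 h2)
  obtain ⟨A₁, hA₁, hA₁o, hA₁s, hA₁c⟩ := haleph (fun x y => e (F (t (T x) (T y)) (T x))) (by
    intro x y hxy hy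
    have hxy' := (hlt x (hxy.trans hy) y hy).2 hxy
    exact he _ ((hFt _ _ hxy' (hT y hy).1).1 _ ⟨hxy', rfl⟩))
  have hA₁om := om1_of_hasOType hA₁o
  have hAom : Om1 (T '' A₁) := om1_transfer hlt hA₁ hA₁om
  have hAs := stationary_transfer hT hS hlt hA₁ hA₁s
  have hAκ : T '' A₁ ⊆ Iio (Cardinal.aleph (Ordinal.omega0 + 1)).ord := by
    rintro _ ⟨x, hx, rfl⟩
    exact (hT x (hA₁ hx)).1
  have hDc : {ξ | ∃ α ∈ T '' A₁, ∃ β ∈ T '' A₁, α < β ∧ F (t α β) α = ξ}.Countable := by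
    apply Set.countable_of_injective_of_countable_image (f := e)
    · apply hei.mono
      rintro _ ⟨α, hα, β, hβ, h, rfl⟩
      exact (hFt α β h (hAκ hβ)).1 _ ⟨h, rfl⟩
    · refine hA₁c.mono ?_
      rintro _ ⟨_, ⟨_, ⟨x, hx, rfl⟩, _, ⟨y, hy, rfl⟩, h, rfl⟩, rfl⟩
      exact ⟨x, hx, y, hy, (hlt x (hA₁ hx) y (hA₁ hy)).1 h, rfl⟩
  generalize T '' A₁ = A at hAom hAs hAκ hDc
  have hbA : BddAbove A := ⟨_, fun x hx => le_of_lt (hAκ hx)⟩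
  obtain ⟨J, hJA, hJs, hJm⟩ := exists_J hAom
  obtain ⟨code, hcode, hcodei⟩ := exists_code hAom f
  obtain ⟨γ₃, hγ₃, m, hm, hmm⟩ := countable_emb hDc
  obtain ⟨γ₅, hγ₅, g, hg, hrain⟩ := hbeth (fun x y => code (f (J x) (J y)))
    (fun _ _ _ _ => hcode _)
    (by
      intro α β γ δ hαβ hβ hγδ hδ h
      have h1 := hcodei _ (hJA α (hαβ.trans hβ)) _ (hJA β hβ) _ (hJA γ (hγδ.trans hδ))
        _ (hJA δ hδ) h
      have h2 := hnorm _ _ _ _ (hJm (hαβ.trans hβ) hβ hαβ) (hAκ (hJA β hβ))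
        (hJm (hγδ.trans hδ) hδ hγδ) (hAκ (hJA δ hδ)) h1
      exact hJm.injOn hβ hδ h2)
    (by
      refine ⟨γ₃, hγ₃, fun η β hηβ hβ => ?_⟩
      have hη := hηβ.trans hβ
      have hJηβ := hJm hη hβ hηβ
      have hmem : ∀ x, x < β ∧ code (f (J x) (J β)) = code (f (J η) (J β)) →
          J x ∈ t (J η) (J β) ∧ F (t (J η) (J β)) (J x) ∈
            {ξ | ∃ α ∈ A, ∃ β ∈ A, α < β ∧ F (t α β) α = ξ} := by
        rintro x ⟨hx, hc⟩
        have hx1 := hx.trans hβ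
        have h1 := hcodei _ (hJA x hx1) _ (hJA β hβ) _ (hJA η hη) _ (hJA β hβ) hc
        have h2 : t (J η) (J β) = t (J x) (J β) := by
          simp only [t, h1]
        refine ⟨⟨hJm hx1 hβ hx, h1⟩, J x, hJA x hx1, J β, hJA β hβ, hJm hx1 hβ hx, ?_⟩
        rw [h2]
      refine ⟨OrderEmbedding.ofStrictMono
        (fun x => ⟨m (F (t (J η) (J β)) (J x.1)), hm _ (hmem _ x.2).2⟩) ?_⟩
      intro x y hxy
      exact hmm (hmem _ x.2).2 (hmem _ y.2).2
        ((hFt _ _ hJηβ (hAκ (hJA β hβ))).2 (hmem _ x.2).1 (hmem _ y.2).1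
          (hJm (x.2.1.trans hβ) (y.2.1.trans hβ) hxy)))
  have : Countable (Iio γ₅) := ((countable_Iio_iff γ₅).2 hγ₅).to_subtype
  obtain ⟨i, hi, his⟩ := pigeon hAom hbA hAs
    (fun i : Iio γ₅ => J '' {ξ | ξ < (Cardinal.aleph 1).ord ∧ g ξ = i})
    (by
      rintro i _ ⟨x, hx, rfl⟩
      exact hJA x hx.1)
    (by
      intro a ha
      obtain ⟨x, hx, rfl⟩ := hJs a ha
      exact mem_iUnion.2 ⟨⟨g x, hg x hx⟩, x, ⟨hx, rfl⟩, rfl⟩)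
  refine ⟨_, ?_, hasOType_of_om1 hi, his, ?_⟩
  · rintro _ ⟨x, hx, rfl⟩
    exact hAκ (hJA x hx.1)
  · rintro _ ⟨α, hα, rfl⟩ _ ⟨β, hβ, rfl⟩ _ ⟨γ', hγ', rfl⟩ _ ⟨δ, hδ, rfl⟩ h1 h2 h
    obtain ⟨rfl, rfl⟩ := hrain i i.2 α hα β hβ γ' hγ' δ hδ
      ((hJm.lt_iff_lt hα.1 hβ.1).1 h1) ((hJm.lt_iff_lt hγ'.1 hδ.1).1 h2) (congrArg code h)
    exact ⟨rfl, rfl⟩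
end

section
/- If the stationary Chang's Conjecture holds and ω₁ →^poly (par(<ω₁))²_{<ω₁-t-bdd} holds, then ω₂ →^poly (ω₁-st)²_{<ω₂-t-bdd}; in particular, every normal ω-bounded coloring f:[ω₂]²→ω₂ admits an f-rainbow subset A of order type ω₁ that is stationary in sup A. -/
open Set Cardinal Ordinal

universe u

/-- The stationary Chang's Conjecture: every `e : [ω₂]^{<ω} → ω₁` admits `A ⊆ ω₂` of
order type `ω₁`, stationary in its supremum, with `e''[A]^{<ω}` countable. -/
def StationaryChang : Prop :=
  ∀ e : Finset Ordinal.{0} → Ordinal.{0},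
    (∀ s : Finset Ordinal.{0}, ↑s ⊆ Set.Iio (Cardinal.aleph 2).ord →
      e s < (Cardinal.aleph 1).ord) →
    ∃ A : Set Ordinal.{0}, A ⊆ Set.Iio (Cardinal.aleph 2).ord ∧
      HasOType A (Cardinal.aleph 1).ord ∧ IsStationaryIn A (sSup A) ∧
      {ξ : Ordinal.{0} | ∃ s : Finset Ordinal.{0}, ↑s ⊆ A ∧ e s = ξ}.Countable

theorem aux_ord_lift1 : Ordinal.lift.{u, 0} (Cardinal.aleph 1).ord = (Cardinal.aleph 1).ord := by
  simp

theorem aux_ord_lift2 : Ordinal.lift.{u, 0} (Cardinal.aleph 2).ord = (Cardinal.aleph 2).ord := by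
  rw [Cardinal.lift_ord, Cardinal.lift_aleph]; simp

theorem aux_liftIso (o : Ordinal.{0}) :
    Nonempty (Set.Iio o ≃o Set.Iio (Ordinal.lift.{u, 0} o)) := by
  refine ⟨StrictMono.orderIsoOfSurjective
    (fun x => ⟨Ordinal.lift.{u, 0} x.1, Ordinal.lift_lt.2 x.2⟩) ?_ ?_⟩
  · intro x y h
    exact Subtype.mk_lt_mk.2 (Ordinal.lift_lt.2 h)
  · rintro ⟨y, hy⟩
    obtain ⟨z, rfl⟩ := Ordinal.mem_range_lift_of_le (le_of_lt hy)
    exact ⟨⟨z, Ordinal.lift_lt.1 hy⟩, rfl⟩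

universe v w

theorem aux_iso1 : Nonempty (Set.Iio ((Cardinal.aleph 1).ord : Ordinal.{u}) ≃o
    Set.Iio ((Cardinal.aleph 1).ord : Ordinal.{v})) := by
  obtain ⟨a⟩ := aux_liftIso.{u} (Cardinal.aleph 1).ord
  obtain ⟨b⟩ := aux_liftIso.{v} (Cardinal.aleph 1).ord
  rw [aux_ord_lift1] at a b
  exact ⟨a.symm.trans b⟩

theorem aux_countable_embed (α : Type w) [LinearOrder α] [WellFoundedLT α] [Countable α] :
    ∃ γ : Ordinal.{u}, γ < (Cardinal.aleph 1).ord ∧ Nonempty (α ↪o Set.Iio γ) := by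
  have h1 : Ordinal.type (α := α) (· < ·) < (Cardinal.aleph 1).ord := by
    rw [Cardinal.lt_ord, Ordinal.card_type, Cardinal.lt_aleph_one_iff]
    exact Cardinal.mk_le_aleph0
  have h2 : Ordinal.lift.{u} (Ordinal.type (α := α) (· < ·)) <
      Ordinal.lift.{w} ((Cardinal.aleph 1).ord : Ordinal.{u}) := by
    have := Ordinal.lift_lt.{u}.2 h1
    simpa using this
  obtain ⟨γ, h3, h4⟩ := Ordinal.lt_lift_iff.1 h2
  refine ⟨γ, h3, ?_⟩
  rw [← Ordinal.type_toType γ] at h4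
  obtain ⟨e⟩ := (Ordinal.lift_type_eq.{u, w, 0}).1 h4
  exact ⟨((OrderIso.ofRelIsoLT e).symm.trans Ordinal.ToType.mk.symm).toOrderEmbedding⟩

/-- A type of size at most `ℵ₁` injects into `ω₁`. -/
theorem aux_inj (X : Type w) (hX : Cardinal.mk X ≤ Cardinal.aleph 1) :
    ∃ h : X → Ordinal.{u}, Function.Injective h ∧ ∀ x, h x < (Cardinal.aleph 1).ord := by
  have : Cardinal.lift.{u+1} (Cardinal.mk X) ≤
      Cardinal.lift.{w} (Cardinal.mk (Set.Iio ((Cardinal.aleph 1).ord : Ordinal.{u}))) := by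
    rw [Cardinal.mk_Iio_ordinal]
    have := Cardinal.lift_le.{u+1}.2 hX
    simpa using this
  obtain ⟨e⟩ := Cardinal.lift_mk_le'.1 this
  exact ⟨fun x => (e x).1, fun x y h => e.injective (Subtype.ext h), fun x => (e x).2⟩

theorem aux_injOn {Y : Type w} (K : Set Y) (hX : Cardinal.mk K ≤ Cardinal.aleph 1) :
    ∃ h : Y → Ordinal.{u}, InjOn h K ∧ ∀ x, h x < (Cardinal.aleph 1).ord := by
  classical
  obtain ⟨h, h1, h2⟩ := aux_inj.{u} K hX
  refine ⟨fun x => if hx : x ∈ K then h ⟨x, hx⟩ else 0, ?_, ?_⟩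
  · intro x hx y hy hxy
    simp only [hx, hy, dif_pos] at hxy
    exact congrArg Subtype.val (h1 hxy)
  · intro x
    by_cases hx : x ∈ K
    · simp only [hx, dif_pos]; exact h2 _
    · simp only [hx, dif_neg, not_false_eq_true]
      rw [Cardinal.lt_ord]; simp [← Cardinal.aleph_zero]

theorem aux_bdd {A : Set Ordinal.{u}} (π : Set.Iio ((Cardinal.aleph 1).ord : Ordinal.{u}) ≃o A)
    {S : Set Ordinal.{u}} (hS : S.Countable) (hSA : S ⊆ A) : ∃ a ∈ A, ∀ s ∈ S, s < a := by
  have : Countable S := hS.to_subtype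
  have hlt : ⨆ s : S, Order.succ (π.symm ⟨s.1, hSA s.2⟩).1 < (Cardinal.aleph 1).ord := by
    refine lt_of_lt_of_eq ?_ (Cardinal.ord_aleph 1).symm
    apply Ordinal.iSup_lt_omega_one
    intro i
    have h := (π.symm ⟨i.1, hSA i.2⟩).2
    have hl : Order.IsSuccLimit (Cardinal.aleph 1).ord :=
      Cardinal.isSuccLimit_ord (Cardinal.aleph0_le_aleph 1)
    exact lt_of_lt_of_eq (hl.succ_lt h) (Cardinal.ord_aleph 1)
  refine ⟨π ⟨_, hlt⟩, (π ⟨_, hlt⟩).2, fun s hs => ?_⟩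
  have h1 : π.symm ⟨s, hSA hs⟩ < ⟨_, hlt⟩ := by
    apply Subtype.mk_lt_mk.2
    refine lt_of_lt_of_le (Order.lt_succ _) ?_
    exact Ordinal.le_iSup (fun s : S => Order.succ (π.symm ⟨s.1, hSA s.2⟩).1) ⟨s, hs⟩
  have h2 := π.lt_iff_lt.2 h1
  rw [OrderIso.apply_symm_apply] at h2
  exact h2

theorem aux_hasOType {A B : Set Ordinal.{u}} (hA : HasOType A (Cardinal.aleph 1).ord)
    (hBA : B ⊆ A) (hun : ∀ a ∈ A, ∃ b ∈ B, a < b) : HasOType B (Cardinal.aleph 1).ord := by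
  obtain ⟨π⟩ := hA
  have hnc : ¬ B.Countable := fun h => by
    obtain ⟨a, ha, h1⟩ := aux_bdd π h hBA
    obtain ⟨b, hb, h2⟩ := hun a ha
    exact lt_asymm h2 (h1 b hb)
  have hle : Ordinal.type (α := B) (· < ·) ≤
      Ordinal.type (α := Set.Iio ((Cardinal.aleph 1).ord : Ordinal.{u})) (· < ·) := by
    apply Ordinal.type_le_iff'.2
    let e : B ↪o A := Subtype.orderEmbedding hBA
    exact ⟨OrderEmbedding.ltEmbedding (e.trans π.symm.toOrderEmbedding)⟩
  have hge : Ordinal.type (α := Set.Iio ((Cardinal.aleph 1).ord : Ordinal.{u})) (· < ·) ≤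
      Ordinal.type (α := B) (· < ·) := by
    have : Ordinal.type (α := Set.Iio ((Cardinal.aleph 1).ord : Ordinal.{u})) (· < ·) =
      (Cardinal.aleph 1).ord := by
      rw [Ordinal.type_Iio_lt, Ordinal.typein_ordinal]
      simp
    rw [this, Cardinal.ord_le, Ordinal.card_type]
    by_contra h
    rw [not_le, Cardinal.lt_aleph_one_iff, Cardinal.le_aleph0_iff_set_countable] at h
    exact hnc h
  obtain ⟨e⟩ := Ordinal.type_eq.1 (le_antisymm hge hle)
  exact ⟨OrderIso.ofRelIsoLT e⟩

theorem aux_club_inter {ι : Type w} [Countable ι] [Nonempty ι] (C : ι → Set Ordinal.{u})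
    (δ : Ordinal.{u}) (hC : ∀ i, IsClubIn (C i) δ)
    (hcof : ∀ S : Set Ordinal.{u}, S.Countable → S ⊆ Set.Iio δ → ∃ b < δ, ∀ s ∈ S, s < b) :
    IsClubIn (⋂ i, C i) δ := by
  refine ⟨?_, ?_, ?_⟩
  · obtain ⟨i⟩ := ‹Nonempty ι›
    exact (iInter_subset C i).trans (hC i).1
  · intro α hα
    have step : ∀ x : Set.Iio δ, ∃ y : Set.Iio δ, x < y ∧ ∀ i, ∃ z ∈ C i, x.1 ≤ z ∧ z < y.1 := by
      rintro ⟨x, hx⟩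
      choose z hz1 hz2 using fun i => (hC i).2.1 x hx
      obtain ⟨b, hb, h⟩ := hcof (insert x (range z)) ((countable_range z).insert x) (by
        rintro y (rfl | ⟨i, rfl⟩)
        · exact hx
        · exact (hC i).1 (hz1 i))
      exact ⟨⟨b, hb⟩, h x (mem_insert _ _), fun i =>
        ⟨z i, hz1 i, hz2 i, h _ (mem_insert_of_mem _ ⟨i, rfl⟩)⟩⟩
    choose nx hn1 hn2 using step
    let x : ℕ → Set.Iio δ := fun n => nx^[n] ⟨α, hα⟩
    have hx : ∀ n, x (n+1) = nx (x n) := fun n => Function.iterate_succ_apply' _ _ _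
    obtain ⟨b, hb, hbx⟩ := hcof (range fun n => (x n).1) (countable_range _) (by
      rintro _ ⟨n, rfl⟩; exact (x n).2)
    have hbd : BddAbove (range fun n => (x n).1) :=
      ⟨b, by rintro _ ⟨n, rfl⟩; exact (hbx _ ⟨n, rfl⟩).le⟩
    have hle : ∀ n, (x n).1 ≤ ⨆ n, (x n).1 := fun n => le_ciSup hbd n
    have hsup : (⨆ n, (x n).1) < δ :=
      lt_of_le_of_lt (ciSup_le fun n => (hbx _ ⟨n, rfl⟩).le) hb
    refine ⟨⨆ n, (x n).1, mem_iInter.2 fun i => ?_, hle 0⟩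
    refine (hC i).2.2 _ hsup ?_ ?_
    · have h1 : (x 0).1 < (x 1).1 := by
        have := hn1 (x 0)
        rw [← hx] at this
        exact this
      exact (lt_of_le_of_lt (zero_le) (lt_of_lt_of_le h1 (hle 1))).ne'
    · have hbd2 : BddAbove (C i ∩ Iio (⨆ n, (x n).1)) := ⟨_, fun y hy => hy.2.le⟩
      apply le_antisymm
      · exact csSup_le' fun y hy => hy.2.le
      · refine ciSup_le fun n => ?_
        obtain ⟨z, hz, h1, h2⟩ := hn2 (x n) i
        rw [← hx] at h2
        exact h1.trans (le_csSup hbd2 ⟨hz, lt_of_lt_of_le h2 (hle _)⟩)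
  · intro α hα h0 hs
    refine mem_iInter.2 fun i => (hC i).2.2 α hα h0 ?_
    apply le_antisymm
    · exact csSup_le' fun y hy => hy.2.le
    · conv_lhs => rw [← hs]
      apply csSup_le_csSup' ⟨α, fun y hy => hy.2.le⟩
      exact inter_subset_inter_left _ (iInter_subset C i)

theorem aux_sSup_lift (X : Set Ordinal.{0}) (hX : BddAbove X) :
    sSup (Ordinal.lift.{u, 0} '' X) = Ordinal.lift.{u, 0} (sSup X) := by
  have hub : ∀ y ∈ Ordinal.lift.{u, 0} '' X, y ≤ Ordinal.lift.{u, 0} (sSup X) := by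
    rintro _ ⟨x, hx, rfl⟩
    exact Ordinal.lift_le.2 (le_csSup hX hx)
  apply le_antisymm
  · exact csSup_le' hub
  · obtain ⟨y, hy⟩ := Ordinal.mem_range_lift_of_le (csSup_le' hub)
    rw [← hy, Ordinal.lift_le]
    refine csSup_le' fun x hx => ?_
    rw [← Ordinal.lift_le.{u}, hy]
    exact le_csSup ⟨_, hub⟩ ⟨x, hx, rfl⟩

theorem aux_scc (hscc : StationaryChang) (e : Ordinal.{u} → Ordinal.{u} → Ordinal.{0})
    (he : ∀ α β, e α β < (Cardinal.aleph 1).ord) :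
    ∃ A : Set Ordinal.{u}, A ⊆ Set.Iio (Cardinal.aleph 2).ord ∧
      HasOType A (Cardinal.aleph 1).ord ∧ IsStationaryIn A (sSup A) ∧
      {ξ | ∃ α ∈ A, ∃ β ∈ A, α < β ∧ e α β = ξ}.Countable := by
  obtain ⟨A, h1, ⟨π⟩, h3, h4⟩ := hscc
    (fun s => e (Ordinal.lift.{u, 0} (sInf (s : Set Ordinal.{0})))
      (Ordinal.lift.{u, 0} (sSup (s : Set Ordinal.{0})))) (fun _ _ => he _ _)
  have hbd : BddAbove A := ⟨_, fun x hx => (h1 hx).le⟩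
  refine ⟨Ordinal.lift.{u, 0} '' A, ?_, ?_, ?_, ?_⟩
  · rintro _ ⟨x, hx, rfl⟩
    rw [← aux_ord_lift2]
    exact Ordinal.lift_lt.2 (h1 hx)
  · obtain ⟨i⟩ := aux_iso1.{u, 0}
    refine ⟨(i.trans π).trans (StrictMono.orderIsoOfSurjective
      (fun x => ⟨Ordinal.lift.{u, 0} x.1, mem_image_of_mem _ x.2⟩) ?_ ?_)⟩
    · intro x y h
      exact Subtype.mk_lt_mk.2 (Ordinal.lift_lt.2 h)
    · rintro ⟨_, y, hy, rfl⟩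
      exact ⟨⟨y, hy⟩, rfl⟩
  · rw [aux_sSup_lift A hbd]
    intro C hC
    have hcl : IsClubIn (Ordinal.lift.{u, 0} ⁻¹' C) (sSup A) := by
      refine ⟨fun x hx => Ordinal.lift_lt.1 (hC.1 hx), fun α hα => ?_, fun α hα h0 hs => ?_⟩
      · obtain ⟨β, hβ, hab⟩ := hC.2.1 _ (Ordinal.lift_lt.2 hα)
        obtain ⟨β, rfl⟩ := Ordinal.mem_range_lift_of_le (hC.1 hβ).le
        exact ⟨β, hβ, Ordinal.lift_le.1 hab⟩
      · refine hC.2.2 _ (Ordinal.lift_lt.2 hα) ?_ ?_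
        · intro h; exact h0 (Ordinal.lift_inj.1 (h.trans Ordinal.lift_zero.symm))
        · have h5 := aux_sSup_lift.{u} _ (⟨α, fun y hy => hy.2.le⟩ : BddAbove (Ordinal.lift.{u, 0} ⁻¹' C ∩ Iio α))
          rw [hs] at h5
          refine Eq.trans ?_ h5
          congr 1
          ext y
          constructor
          · rintro ⟨hy, hya⟩
            obtain ⟨y, rfl⟩ := Ordinal.mem_range_lift_of_le (le_of_lt hya)
            exact ⟨y, ⟨hy, Ordinal.lift_lt.1 hya⟩, rfl⟩
          · rintro ⟨y, ⟨hy, hya⟩, rfl⟩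
            exact ⟨hy, Ordinal.lift_lt.2 hya⟩
    obtain ⟨x, hx, hxC⟩ := h3 _ hcl
    exact ⟨_, ⟨x, hx, rfl⟩, hxC⟩
  · refine h4.mono ?_
    rintro _ ⟨_, ⟨α, hα, rfl⟩, _, ⟨β, hβ, rfl⟩, hab, rfl⟩
    refine ⟨{α, β}, ?_, ?_⟩
    · intro x hx
      simp only [Finset.coe_insert, Finset.coe_singleton, mem_insert_iff, mem_singleton_iff] at hx
      rcases hx with rfl | rfl <;> assumption
    · have := (Ordinal.lift_lt.1 hab).le
      simp [this]

theorem aux_embed (T : Set Ordinal.{u}) (γ : Ordinal.{v}) (hT : Nonempty (T ↪o Set.Iio γ)) :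
    ∃ r : Ordinal.{u} → Ordinal.{v}, (∀ x ∈ T, r x < γ) ∧ StrictMonoOn r T := by
  classical
  obtain ⟨φ⟩ := hT
  refine ⟨fun x => if h : x ∈ T then (φ ⟨x, h⟩).1 else 0, fun x hx => ?_, fun x hx y hy h => ?_⟩
  · simp only [hx, dif_pos]; exact (φ ⟨x, hx⟩).2
  · simp only [hx, hy, dif_pos]
    exact φ.lt_iff_lt.2 (Subtype.mk_lt_mk.2 h)

theorem aux_embed' (T : Set Ordinal.{u}) (γ : Ordinal.{v}) (r : Ordinal.{u} → Ordinal.{v})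
    (h1 : ∀ x ∈ T, r x < γ) (h2 : StrictMonoOn r T) : Nonempty (T ↪o Set.Iio γ) :=
  ⟨OrderEmbedding.ofStrictMono (fun x => ⟨r x.1, h1 _ x.2⟩)
    fun x y h => Subtype.mk_lt_mk.2 (h2 x.2 y.2 h)⟩

theorem aux_main.{a, b, c, d, k} (hscc : StationaryChang)
    (hpar : ∀ f : Ordinal.{a} → Ordinal.{a} → Ordinal.{b},
      (∀ α β : Ordinal, α < β → β < (Cardinal.aleph 1).ord → f α β < (Cardinal.aleph 1).ord) →
      IsNormalColoring f (Cardinal.aleph 1).ord →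
      TypeBounded f (Cardinal.aleph 1).ord (Cardinal.aleph 1).ord →
      ∃ γ : Ordinal.{k}, γ < (Cardinal.aleph 1).ord ∧ ∃ g : Ordinal.{a} → Ordinal.{k},
        (∀ ξ : Ordinal, ξ < (Cardinal.aleph 1).ord → g ξ < γ) ∧
        ∀ i : Ordinal, i < γ →
          IsRainbow f {ξ : Ordinal | ξ < (Cardinal.aleph 1).ord ∧ g ξ = i})
    (f : Ordinal.{c} → Ordinal.{c} → Ordinal.{d})
    (hn : IsNormalColoring f (Cardinal.aleph 2).ord)
    (hb : TypeBounded f (Cardinal.aleph 2).ord (Cardinal.aleph 2).ord) :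
      ∃ A : Set Ordinal, A ⊆ Set.Iio (Cardinal.aleph 2).ord ∧
        HasOType A (Cardinal.aleph 1).ord ∧ IsStationaryIn A (sSup A) ∧ IsRainbow f A := by
  classical
  obtain ⟨γ, hγ, hb⟩ := hb
  -- choose collapses of color classes and an injection of `γ` into `ω₁`
  have hr : ∀ T : Set Ordinal.{c}, ∃ r : Ordinal.{c} → Ordinal.{c}, OTypeLE T γ →
      (∀ x ∈ T, r x < γ) ∧ StrictMonoOn r T := by
    intro T
    by_cases hT : OTypeLE T γ
    · obtain ⟨r, h1, h2⟩ := aux_embed T γ hT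
      exact ⟨r, fun _ => ⟨h1, h2⟩⟩
    · exact ⟨id, fun h => absurd h hT⟩
  choose r hr using hr
  have hcard : Cardinal.mk (Set.Iio γ) ≤ Cardinal.aleph 1 := by
    rw [Cardinal.mk_Iio_ordinal]
    have h2 : (2 : Ordinal.{c}) = Order.succ 1 := by
      rw [← Ordinal.add_one_eq_succ]; norm_num
    rw [Cardinal.lt_ord, h2, Cardinal.aleph_succ, Order.lt_succ_iff] at hγ
    have := Cardinal.lift_le.{c+1}.2 hγ
    simpa using this
  obtain ⟨h, hinj, hlt⟩ := aux_injOn.{0} (Set.Iio γ) hcard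
  obtain ⟨A, hA2, hAo, hAst, hAc⟩ := aux_scc hscc
    (fun ξ β => h (r {ζ | ζ < β ∧ f ζ β = f ξ β} ξ)) (fun _ _ => hlt _)
  set E := {x | ∃ α ∈ A, ∃ β ∈ A, α < β ∧ h (r {ζ | ζ < β ∧ f ζ β = f α β} α) = x} with hE
  let S : Set Ordinal.{c} := {x | x < γ ∧ h x ∈ E}
  have hS : S.Countable := by
    have hSi : InjOn h S := hinj.mono fun x hx => hx.1
    refine Set.countable_of_injective_of_countable_image hSi (hAc.mono ?_)
    rintro _ ⟨x, hx, rfl⟩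
    exact hx.2
  have : Countable S := hS.to_subtype
  obtain ⟨γ', hγ', hemb⟩ := aux_countable_embed.{a} S
  obtain ⟨ψ, hψ1, hψ2⟩ := aux_embed S γ' hemb
  obtain ⟨π⟩ := id hAo
  obtain ⟨ι⟩ := aux_iso1.{a, c}
  let ρ := ι.trans π
  obtain ⟨p, hp⟩ : ∃ p : Ordinal.{a} → Ordinal.{c},
      ∀ x (hx : x < (Cardinal.aleph 1).ord), p x = (ρ ⟨x, hx⟩).1 :=
    ⟨fun x => if hx : x < (Cardinal.aleph 1).ord then (ρ ⟨x, hx⟩).1 else 0,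
      fun x hx => by simp only [hx, dif_pos]⟩
  have hpA : ∀ x < (Cardinal.aleph 1).ord, p x ∈ A := fun x hx => by
    rw [hp x hx]; exact (ρ ⟨x, hx⟩).2
  have hpm : ∀ x y, x < y → y < (Cardinal.aleph 1).ord → p x < p y := fun x y hxy hy => by
    rw [hp x (hxy.trans hy), hp y hy]
    exact ρ.lt_iff_lt.2 (Subtype.mk_lt_mk.2 hxy)
  have hpi : ∀ x y, x < (Cardinal.aleph 1).ord → y < (Cardinal.aleph 1).ord → p x = p y → x = y := by
    intro x y hx hy hxy
    rcases lt_trichotomy x y with h' | h' | h'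
    · exact absurd hxy (hpm _ _ h' hy).ne
    · exact h'
    · exact absurd hxy (hpm _ _ h' hx).ne'
  have hps : ∀ y ∈ A, ∃ x < (Cardinal.aleph 1).ord, p x = y := fun y hy =>
    ⟨(ρ.symm ⟨y, hy⟩).1, (ρ.symm ⟨y, hy⟩).2, by
      rw [hp _ (ρ.symm ⟨y, hy⟩).2]; simp⟩
  -- code the colors
  let q : Set.Iio ((Cardinal.aleph 1).ord : Ordinal.{a}) ×
    Set.Iio ((Cardinal.aleph 1).ord : Ordinal.{a}) → Ordinal.{d} := fun x => f (p x.1.1) (p x.2.1)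
  have hK : Cardinal.mk (range q) ≤ Cardinal.aleph 1 := by
    have h1 := Cardinal.mk_range_le_lift (f := q)
    have h2 : Cardinal.mk (Set.Iio ((Cardinal.aleph 1).ord : Ordinal.{a}) ×
        Set.Iio ((Cardinal.aleph 1).ord : Ordinal.{a})) = Cardinal.aleph 1 := by
      rw [Cardinal.mk_prod, Cardinal.mk_Iio_ordinal]
      simp
    rw [h2] at h1
    simpa using h1
  obtain ⟨cd, hcd, hcdlt⟩ := aux_injOn.{b} (range q) hK
  have hcd' : ∀ α β α' β', α < (Cardinal.aleph 1).ord → β < (Cardinal.aleph 1).ord →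
      α' < (Cardinal.aleph 1).ord → β' < (Cardinal.aleph 1).ord →
      cd (f (p α) (p β)) = cd (f (p α') (p β')) → f (p α) (p β) = f (p α') (p β') := by
    intro α β α' β' h1 h2 h3 h4 h5
    exact hcd ⟨(⟨α, h1⟩, ⟨β, h2⟩), rfl⟩ ⟨(⟨α', h3⟩, ⟨β', h4⟩), rfl⟩ h5
  obtain ⟨θ, hθ, g, hg, hrain⟩ := hpar (fun α β => cd (f (p α) (p β)))
    (fun _ _ _ _ => hcdlt _)
    (by
      intro α β α' β' h1 h2 h3 h4 h5
      have h6 := hcd' _ _ _ _ (h1.trans h2) h2 (h3.trans h4) h4 h5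
      exact hpi _ _ h2 h4 (hn _ _ _ _ (hpm _ _ h1 h2) (hA2 (hpA _ h2)) (hpm _ _ h3 h4)
        (hA2 (hpA _ h4)) h6))
    (by
      refine ⟨γ', hγ', fun η β hηβ hβ => ?_⟩
      let T : Set Ordinal.{c} := {ζ | ζ < p β ∧ f ζ (p β) = f (p η) (p β)}
      have hTγ := hr T (hb _ _ (hpm _ _ hηβ hβ) (hA2 (hpA _ hβ)))
      have key : ∀ ξ, (ξ < β ∧ cd (f (p ξ) (p β)) = cd (f (p η) (p β))) →
          p ξ ∈ T ∧ r T (p ξ) ∈ S := by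
        rintro ξ ⟨h1, h2⟩
        have h3 := hcd' _ _ _ _ (h1.trans hβ) hβ (hηβ.trans hβ) hβ h2
        have h4 : p ξ ∈ T := ⟨hpm _ _ h1 hβ, h3⟩
        refine ⟨h4, hTγ.1 _ h4, p ξ, hpA _ (h1.trans hβ), p β, hpA _ hβ, hpm _ _ h1 hβ, ?_⟩
        rw [h3]
      refine aux_embed' _ γ' (fun ξ => ψ (r T (p ξ))) ?_ ?_
      · intro ξ hξ
        exact hψ1 _ (key ξ hξ).2
      · intro ξ hξ ξ' hξ' hlt'
        exact hψ2 (key ξ hξ).2 (key ξ' hξ').2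
          (hTγ.2 (key ξ hξ).1 (key ξ' hξ').1 (hpm _ _ hlt' (hξ'.1.trans hβ))))
  -- the pieces
  let B : Ordinal.{k} → Set Ordinal.{c} := fun i => p '' {ξ | ξ < (Cardinal.aleph 1).ord ∧ g ξ = i}
  have hBA : ∀ i, B i ⊆ A := by
    rintro i _ ⟨ξ, hξ, rfl⟩
    exact hpA _ hξ.1
  have hbdA : BddAbove A := ⟨_, fun x hx => (hA2 hx).le⟩
  have hnomax : ∀ a ∈ A, ∃ a' ∈ A, a < a' := fun a ha => by
    obtain ⟨a', h1, h2⟩ := aux_bdd π (countable_singleton a) (singleton_subset_iff.2 ha)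
    exact ⟨a', h1, h2 a rfl⟩
  have hAδ : ∀ a ∈ A, a < sSup A := fun a ha => by
    obtain ⟨a', h1, h2⟩ := hnomax a ha
    exact lt_of_lt_of_le h2 (le_csSup hbdA h1)
  have hpos : (0 : Ordinal.{a}) < (Cardinal.aleph 1).ord := by
    rw [Cardinal.lt_ord]; simp [← Cardinal.aleph_zero]
  have hAne : A.Nonempty := ⟨p 0, hpA 0 hpos⟩
  have hcof : ∀ X : Set Ordinal.{c}, X.Countable → X ⊆ Set.Iio (sSup A) →
      ∃ b < sSup A, ∀ s ∈ X, s < b := by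
    intro X hX hXs
    have hch : ∀ s : X, ∃ a ∈ A, s.1 < a := fun s => exists_lt_of_lt_csSup hAne (hXs s.2)
    choose m hm1 hm2 using hch
    have : Countable X := hX.to_subtype
    obtain ⟨b, hb1, hb2⟩ := aux_bdd π (countable_range m) (by rintro _ ⟨s, rfl⟩; exact hm1 s)
    exact ⟨b, hAδ b hb1, fun s hs => (hm2 ⟨s, hs⟩).trans (hb2 _ ⟨⟨s, hs⟩, rfl⟩)⟩
  obtain ⟨i, hi, hst⟩ : ∃ i < θ, IsStationaryIn (B i) (sSup A) := by
    by_contra hcon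
    push Not at hcon
    have hcon' : ∀ i : Set.Iio θ, ∃ C, IsClubIn C (sSup A) ∧ ¬ (B i.1 ∩ C).Nonempty := by
      intro i
      have := hcon i.1 i.2
      unfold IsStationaryIn at this
      push Not at this
      obtain ⟨C, h1, h2⟩ := this
      exact ⟨C, h1, not_nonempty_iff_eq_empty.2 h2⟩
    choose C hC1 hC2 using hcon'
    have : Countable (Set.Iio θ) := by
      rw [← Cardinal.mk_le_aleph0_iff, Cardinal.mk_Iio_ordinal]
      rw [Cardinal.lt_ord, Cardinal.lt_aleph_one_iff] at hθ
      exact Cardinal.lift_le_aleph0.2 hθ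
    have : Nonempty (Set.Iio θ) := ⟨⟨g 0, hg 0 hpos⟩⟩
    obtain ⟨x, hxA, hxC⟩ := hAst _ (aux_club_inter C (sSup A) hC1 hcof)
    obtain ⟨ξ, hξ, rfl⟩ := hps x hxA
    exact hC2 ⟨g ξ, hg ξ hξ⟩ ⟨p ξ, ⟨ξ, ⟨hξ, rfl⟩, rfl⟩, mem_iInter.1 hxC _⟩
  have hun : ∀ a ∈ A, ∃ b ∈ B i, a < b := by
    intro a ha
    obtain ⟨x, hx1, hx2⟩ := hst (Set.Ioo a (sSup A)) ⟨fun x hx => hx.2, fun α hα => by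
        obtain ⟨b, hb1, hb2⟩ := hcof {a, α} (by simp) (by
          rintro y (rfl | rfl)
          · exact hAδ _ ha
          · exact hα)
        exact ⟨b, ⟨hb2 a (by simp), hb1⟩, (hb2 α (by simp)).le⟩,
      fun α hα h0 hs => by
        refine ⟨?_, hα⟩
        rcases (Set.Ioo a (sSup A) ∩ Iio α).eq_empty_or_nonempty with he | ⟨y, hy⟩
        · rw [he] at hs
          exact absurd (by simpa using hs.symm) h0
        · exact hy.1.1.trans hy.2⟩
    exact ⟨x, hx1, hx2.1⟩
  have hsup : sSup (B i) = sSup A := by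
    apply le_antisymm
    · exact csSup_le_csSup' hbdA (hBA i)
    · refine csSup_le' fun a ha => ?_
      obtain ⟨b, hb1, hb2⟩ := hun a ha
      exact hb2.le.trans (le_csSup (hbdA.mono (hBA i)) hb1)
  refine ⟨B i, (hBA i).trans hA2, aux_hasOType hAo (hBA i) hun, by rw [hsup]; exact hst, ?_⟩
  rintro _ ⟨α, hα, rfl⟩ _ ⟨β, hβ, rfl⟩ _ ⟨α', hα', rfl⟩ _ ⟨β', hβ', rfl⟩ h1 h2 h3
  have hback : ∀ x y, x < (Cardinal.aleph 1).ord → p x < p y → x < y := fun x y hx hxy => by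
    by_contra hc
    rcases (not_lt.1 hc).lt_or_eq with h' | h'
    · exact lt_asymm hxy (hpm _ _ h' hx)
    · rw [h'] at hxy; exact lt_irrefl _ hxy
  obtain ⟨rfl, rfl⟩ := hrain i hi α hα β hβ α' hα' β' hβ' (hback _ _ hα.1 h1) (hback _ _ hα'.1 h2)
    (congrArg cd h3)
  exact ⟨rfl, rfl⟩

theorem aux_typeBounded.{c, d} (f : Ordinal.{c} → Ordinal.{c} → Ordinal.{d})
    (hb : OmegaBounded f (Cardinal.aleph 2).ord) :
    TypeBounded f (Cardinal.aleph 2).ord (Cardinal.aleph 2).ord := by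
  refine ⟨(Cardinal.aleph 1).ord, ?_, fun η β _ hβ => ?_⟩
  · rw [Cardinal.ord_lt_ord, Cardinal.aleph_lt_aleph]
    exact one_lt_two
  · have hc : {ξ : Ordinal | ξ < β ∧ f ξ β = f η β}.Countable := by
      refine (((hb (f η β)).image Prod.fst)).mono ?_
      rintro ξ ⟨h1, h2⟩
      exact ⟨(ξ, β), ⟨h1, hβ, h2⟩, rfl⟩
    have : Countable {ξ : Ordinal | ξ < β ∧ f ξ β = f η β} := hc.to_subtype
    obtain ⟨γ, hγ, he⟩ := aux_countable_embed.{c} {ξ : Ordinal | ξ < β ∧ f ξ β = f η β}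
    obtain ⟨r, h1, h2⟩ := aux_embed _ γ he
    exact aux_embed' _ _ r (fun x hx => (h1 x hx).trans hγ) h2

/-- If the stationary Chang's Conjecture and `ω₁ →^poly (par(<ω₁))²_{<ω₁-t-bdd}` hold,
then `ω₂ →^poly (ω₁-st)²_{<ω₂-t-bdd}`; in particular every normal `ω`-bounded coloring
on `[ω₂]²` has a rainbow set of order type `ω₁` stationary in its supremum. -/
theorem stmt9 (hscc : StationaryChang)
    (hpar : ∀ f : Ordinal → Ordinal → Ordinal,
      (∀ α β : Ordinal, α < β → β < (Cardinal.aleph 1).ord → f α β < (Cardinal.aleph 1).ord) →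
      IsNormalColoring f (Cardinal.aleph 1).ord →
      TypeBounded f (Cardinal.aleph 1).ord (Cardinal.aleph 1).ord →
      ∃ γ : Ordinal, γ < (Cardinal.aleph 1).ord ∧ ∃ g : Ordinal → Ordinal,
        (∀ ξ : Ordinal, ξ < (Cardinal.aleph 1).ord → g ξ < γ) ∧
        ∀ i : Ordinal, i < γ →
          IsRainbow f {ξ : Ordinal | ξ < (Cardinal.aleph 1).ord ∧ g ξ = i}) :
    (∀ f : Ordinal → Ordinal → Ordinal,
      (∀ α β : Ordinal, α < β → β < (Cardinal.aleph 2).ord → f α β < (Cardinal.aleph 2).ord) →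
      IsNormalColoring f (Cardinal.aleph 2).ord →
      TypeBounded f (Cardinal.aleph 2).ord (Cardinal.aleph 2).ord →
      ∃ A : Set Ordinal, A ⊆ Set.Iio (Cardinal.aleph 2).ord ∧
        HasOType A (Cardinal.aleph 1).ord ∧ IsStationaryIn A (sSup A) ∧ IsRainbow f A) ∧
    (∀ f : Ordinal → Ordinal → Ordinal,
      (∀ α β : Ordinal, α < β → β < (Cardinal.aleph 2).ord → f α β < (Cardinal.aleph 2).ord) →
      IsNormalColoring f (Cardinal.aleph 2).ord → OmegaBounded f (Cardinal.aleph 2).ord →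
      ∃ A : Set Ordinal, A ⊆ Set.Iio (Cardinal.aleph 2).ord ∧
        HasOType A (Cardinal.aleph 1).ord ∧ IsStationaryIn A (sSup A) ∧ IsRainbow f A) := by

  exact ⟨fun f _ hn hb => aux_main hscc hpar f hn hb,
    fun f _ hn hb => aux_main hscc hpar f hn (aux_typeBounded f hb)⟩
end

section
/- If the principle (*) holds, then ω₂ ↛^poly (ω₁-st)²_{ω-bdd}: there exists a normal ω-bounded coloring f:[ω₂]²→ω₂ such that no A⊆ω₂ of order type ω₁ that is stationary in sup A is f-rainbow. -/
open Set Cardinal Ordinal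

universe u

/-- The principle `(*)`: there is a sequence `⟨S_α : α ∈ S^{ω₂}_ω⟩` of countable
`S_α ⊆ α` such that for every `β ∈ S^{ω₂}_{ω₁}` there is a club `c ⊆ β` of ordinals of
countable cofinality with `c ∩ α ⊆ S_α` for every `α ∈ c`. -/
def StarPrinciple : Prop :=
  ∃ S : Ordinal.{0} → Set Ordinal.{0},
    (∀ α : Ordinal, α < (Cardinal.aleph 2).ord → α.cof = ℵ₀ →
      S α ⊆ Set.Iio α ∧ (S α).Countable) ∧
    ∀ β : Ordinal, β < (Cardinal.aleph 2).ord → β.cof = Cardinal.aleph 1 →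
      ∃ c : Set Ordinal, IsClubIn c β ∧ (∀ α ∈ c, α.cof = ℵ₀) ∧
        ∀ α ∈ c, c ∩ Set.Iio α ⊆ S α

/-- Universe-polymorphic form of the principle `(*)`. -/
theorem star_lift (hstar : StarPrinciple) :
    ∃ S : Ordinal.{u} → Set Ordinal.{u},
    (∀ α : Ordinal, α < (Cardinal.aleph 2).ord → α.cof = ℵ₀ → (S α).Countable) ∧
    ∀ β : Ordinal, β < (Cardinal.aleph 2).ord → β.cof = Cardinal.aleph 1 →
      ∃ c : Set Ordinal, IsClubIn c β ∧ (∀ α ∈ c, α.cof = ℵ₀) ∧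
        ∀ α ∈ c, c ∩ Set.Iio α ⊆ S α := by
  obtain ⟨S, hS, hc⟩ := hstar
  have hω : (Cardinal.aleph 2 : Cardinal.{u}).ord
      = Ordinal.lift.{u} (Cardinal.aleph 2 : Cardinal.{0}).ord := by
    simp
  refine ⟨fun α => {y | ∃ α₀ x, Ordinal.lift.{u} α₀ = α ∧ x ∈ S α₀ ∧ Ordinal.lift.{u} x = y},
    ?_, ?_⟩
  · intro α hα hcof
    rw [hω] at hα
    obtain ⟨α₀, rfl⟩ := Ordinal.mem_range_lift_of_le hα.le
    have h1 : α₀.cof = ℵ₀ := by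
      rw [← Ordinal.lift_cof] at hcof
      exact Cardinal.lift_eq_aleph0.1 hcof
    have h2 := (hS α₀ (Ordinal.lift_lt.1 hα) h1).2
    refine (h2.image Ordinal.lift.{u}).mono ?_
    rintro y ⟨α₁, x, h, hx, rfl⟩
    rw [Ordinal.lift_inj] at h
    subst h
    exact ⟨x, hx, rfl⟩
  · intro β hβ hcof
    rw [hω] at hβ
    obtain ⟨β₀, rfl⟩ := Ordinal.mem_range_lift_of_le hβ.le
    have h1 : β₀.cof = Cardinal.aleph 1 := by
      rw [← Ordinal.lift_cof] at hcof
      have : (Cardinal.aleph 1 : Cardinal.{u}) = Cardinal.lift.{u} (Cardinal.aleph 1 : Cardinal.{0}) := by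
        simp
      rw [this] at hcof
      exact Cardinal.lift_injective hcof
    obtain ⟨c, ⟨hcβ, hunb, hcl⟩, hcc, hcS⟩ := hc β₀ (Ordinal.lift_lt.1 hβ) h1
    refine ⟨Ordinal.lift.{u} '' c, ⟨?_, ?_, ?_⟩, ?_, ?_⟩
    · rintro _ ⟨x, hx, rfl⟩
      exact Ordinal.lift_lt.2 (hcβ hx)
    · intro α hα
      obtain ⟨α₀, rfl⟩ := Ordinal.mem_range_lift_of_le hα.le
      obtain ⟨b, hb, hab⟩ := hunb α₀ (Ordinal.lift_lt.1 hα)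
      exact ⟨_, ⟨b, hb, rfl⟩, Ordinal.lift_le.2 hab⟩
    · intro α hα h0 hsup
      obtain ⟨α₀, rfl⟩ := Ordinal.mem_range_lift_of_le hα.le
      refine ⟨α₀, hcl α₀ (Ordinal.lift_lt.1 hα) (by rintro rfl; simp at h0) ?_, rfl⟩
      have hle : sSup (c ∩ Iio α₀) ≤ α₀ := csSup_le' fun x hx => le_of_lt hx.2
      refine le_antisymm hle ?_
      rw [← Ordinal.lift_le.{u}, ← hsup]
      refine csSup_le' ?_
      rintro _ ⟨⟨x, hx, rfl⟩, hxα⟩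
      rw [Ordinal.lift_le]
      exact le_csSup ⟨α₀, fun y hy => le_of_lt hy.2⟩ ⟨hx, Ordinal.lift_lt.1 hxα⟩
    · rintro _ ⟨x, hx, rfl⟩
      rw [← Ordinal.lift_cof, hcc x hx]
      simp
    · rintro _ ⟨x, hx, rfl⟩ _ ⟨⟨y, hy, rfl⟩, hyx⟩
      exact ⟨x, y, rfl, hcS x hx ⟨hy, Ordinal.lift_lt.1 hyx⟩, rfl⟩

universe v

/-- A pairing function on `ω₂`, across universes. -/
theorem exists_pairing : ∃ P : Ordinal.{u} → Ordinal.{u} → Ordinal.{v},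
    (∀ a b, a < (Cardinal.aleph 2).ord → b < (Cardinal.aleph 2).ord →
      P a b < (Cardinal.aleph 2).ord) ∧
    ∀ a b a' b', a < (Cardinal.aleph 2).ord → b < (Cardinal.aleph 2).ord →
      a' < (Cardinal.aleph 2).ord → b' < (Cardinal.aleph 2).ord →
      P a b = P a' b' → a = a' ∧ b = b' := by
  classical
  have key : Nonempty ((Iio (Cardinal.aleph 2 : Cardinal.{u}).ord ×
      Iio (Cardinal.aleph 2 : Cardinal.{u}).ord) ↪ Iio (Cardinal.aleph 2 : Cardinal.{v}).ord) := by
    rw [← Cardinal.lift_mk_le']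
    have h2 : (ℵ₀ : Cardinal.{max (u+1) (v+1)}) ≤ Cardinal.aleph 2 := Cardinal.aleph0_le_aleph 2
    simp [Cardinal.mk_Iio_ordinal, Cardinal.mul_eq_self h2]
  obtain ⟨e⟩ := key
  refine ⟨fun a b => if h : a < (Cardinal.aleph 2).ord ∧ b < (Cardinal.aleph 2).ord then
    (e (⟨a, h.1⟩, ⟨b, h.2⟩)).1 else 0, ?_, ?_⟩
  · intro a b ha hb
    simp only [ha, hb, and_self, dif_pos]
    exact (e _).2
  · intro a b a' b' ha hb ha' hb' h
    simp only [ha, hb, ha', hb', and_self, dif_pos] at h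
    have := e.injective (Subtype.ext h)
    exact ⟨congrArg (fun q => (q.1 : Ordinal)) this, congrArg (fun q => (q.2 : Ordinal)) this⟩

theorem tail_club {c : Set Ordinal.{u}} {δ x : Ordinal.{u}} (hlim : Order.IsSuccLimit δ)
    (hc : IsClubIn c δ) (hx : x < δ) : IsClubIn (c ∩ Ioi x) δ := by
  obtain ⟨h1, h2, h3⟩ := hc
  refine ⟨fun y hy => h1 hy.1, ?_, ?_⟩
  · intro α hα
    obtain ⟨b, hb, hab⟩ := h2 (Order.succ (max α x)) (hlim.succ_lt (max_lt hα hx))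
    have := Order.succ_le_iff.1 hab
    exact ⟨b, ⟨hb, (le_max_right _ _).trans_lt this⟩, (le_max_left _ _).trans this.le⟩
  · intro α hα h0 hs
    have hne : (c ∩ Ioi x ∩ Iio α).Nonempty := by
      by_contra hne
      rw [not_nonempty_iff_eq_empty] at hne
      rw [hne] at hs
      exact h0 (by simpa using hs.symm)
    obtain ⟨y, ⟨_, hxy⟩, hyα⟩ := hne
    refine ⟨h3 α hα h0 ?_, (lt_trans (mem_Ioi.1 hxy) hyα : x < α)⟩
    refine le_antisymm (csSup_le' fun z hz => le_of_lt hz.2) ?_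
    conv_lhs => rw [← hs]
    exact csSup_le' fun z hz => le_csSup ⟨α, fun w hw => le_of_lt hw.2⟩ ⟨hz.1.1, hz.2⟩

/-- Claim (clmstar): `(*)` implies `ω₂ ↛^poly (ω₁-st)²_{ω-bdd}`: there is a normal
`ω`-bounded coloring on `[ω₂]²` such that no subset of `ω₂` of order type `ω₁` which
is stationary in its supremum is rainbow. -/
theorem stmt10 (hstar : StarPrinciple) :
    ∃ f : Ordinal → Ordinal → Ordinal,
      (∀ α β : Ordinal, α < β → β < (Cardinal.aleph 2).ord → f α β < (Cardinal.aleph 2).ord) ∧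
      IsNormalColoring f (Cardinal.aleph 2).ord ∧
      OmegaBounded f (Cardinal.aleph 2).ord ∧
      ∀ A : Set Ordinal, A ⊆ Set.Iio (Cardinal.aleph 2).ord →
        HasOType A (Cardinal.aleph 1).ord → IsStationaryIn A (sSup A) →
        ¬ IsRainbow f A := by
  classical
  obtain ⟨S, hS, hc⟩ := star_lift hstar
  obtain ⟨P, hP, hPi⟩ := exists_pairing
  have hlim2 : Order.IsSuccLimit (Cardinal.aleph 2).ord :=
    Cardinal.isSuccLimit_ord (Cardinal.aleph0_le_aleph 2)
  let g : Ordinal → Ordinal → Ordinal := fun α β =>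
    if β.cof = ℵ₀ ∧ α ∈ S β then 0 else Order.succ α
  have hg : ∀ α β, α < β → β < (Cardinal.aleph 2).ord → g α β < (Cardinal.aleph 2).ord := by
    intro α β hab hb
    simp only [g]
    split_ifs
    · exact hlim2.bot_lt
    · exact hlim2.succ_lt (hab.trans hb)
  refine ⟨fun α β => P (g α β) β, ?_, ?_, ?_, ?_⟩
  · intro α β hab hb
    exact hP _ _ (hg _ _ hab hb) hb
  · intro α β γ δ hab hb hcd hd h
    exact (hPi _ _ _ _ (hg _ _ hab hb) hb (hg _ _ hcd hd) hd h).2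
  · intro ξ
    rcases Set.eq_empty_or_nonempty {p : Ordinal × Ordinal | p.1 < p.2 ∧
      p.2 < (Cardinal.aleph 2).ord ∧ P (g p.1 p.2) p.2 = ξ} with he | ⟨⟨a, b⟩, hab, hb, hξ⟩
    · rw [he]; exact Set.countable_empty
    · simp only at hab hb hξ
      by_cases hcase : b.cof = ℵ₀ ∧ a ∈ S b
      · refine ((hS b hb hcase.1).image (fun x => (x, b))).mono ?_
        rintro ⟨a', b'⟩ ⟨hab', hb', hξ'⟩
        simp only at hab' hb' hξ'
        obtain ⟨h1, rfl⟩ := hPi _ _ _ _ (hg _ _ hab' hb') hb' (hg _ _ hab hb) hb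
          (hξ'.trans hξ.symm)
        refine ⟨a', ?_, rfl⟩
        by_contra hn
        simp [g, hcase, hn] at h1
      · refine (Set.countable_singleton (a, b)).mono ?_
        rintro ⟨a', b'⟩ ⟨hab', hb', hξ'⟩
        simp only at hab' hb' hξ'
        obtain ⟨h1, rfl⟩ := hPi _ _ _ _ (hg _ _ hab' hb') hb' (hg _ _ hab hb) hb
          (hξ'.trans hξ.symm)
        simp only [g, if_neg hcase] at h1
        split_ifs at h1
        · exact absurd h1.symm (Ordinal.succ_ne_zero a)
        · rw [Order.succ_injective h1]; rfl
  · intro A hA ⟨e⟩ hstat hrb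
    have hlim1 : Order.IsSuccLimit (Cardinal.aleph 1).ord :=
      Cardinal.isSuccLimit_ord (Cardinal.aleph0_le_aleph 1)
    have hmono : StrictMono (fun i => (e i : Ordinal)) := fun i j hij => e.strictMono hij
    have hrange : range (fun i => (e i : Ordinal)) = A := by
      ext x
      constructor
      · rintro ⟨i, rfl⟩; exact (e i).2
      · intro hx; exact ⟨e.symm ⟨x, hx⟩, by simp⟩
    have hcof : (sSup A).cof = Cardinal.aleph 1 := by
      have h := Ordinal.cof_iSup_Iio hmono hlim1.isSuccPrelimit
      rw [iSup, hrange] at h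
      rw [h, Cardinal.isRegular_aleph_one.cof_ord]
    have hδlim : Order.IsSuccLimit (sSup A) := by
      rw [← Ordinal.aleph0_le_cof, hcof]; exact Cardinal.aleph0_le_aleph 1
    have hδ : sSup A < (Cardinal.aleph 2).ord := by
      have hle : sSup A ≤ (Cardinal.aleph 2).ord := csSup_le' fun x hx => le_of_lt (hA hx)
      refine lt_of_le_of_ne hle fun heq => ?_
      have hreg : (Cardinal.aleph 2).IsRegular := by
        have := Cardinal.isRegular_aleph_add_one 1
        rwa [one_add_one_eq_two] at this
      rw [heq, hreg.cof_ord] at hcof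
      have := Cardinal.aleph.injective hcof
      simp at this
    obtain ⟨c, hclub, hcc, hcS⟩ := hc _ hδ hcof
    obtain ⟨x, hxA, hxc⟩ := hstat c hclub
    obtain ⟨y, hyA, hyc, hxy⟩ := hstat _ (tail_club hδlim hclub (hclub.1 hxc))
    obtain ⟨z, hzA, hzc, hyz⟩ := hstat _ (tail_club hδlim hclub (hclub.1 hyc))
    simp only [mem_Ioi] at hxy hyz
    have hxz := hxy.trans hyz
    have h1 : x ∈ S z := hcS z hzc ⟨hxc, hxz⟩
    have h2 : y ∈ S z := hcS z hzc ⟨hyc, hyz⟩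
    have h3 := hrb x hxA z hzA y hyA z hzA hxz hyz (by simp [g, hcc z hzc, h1, h2])
    exact hxy.ne h3.1
end

section
/- Let f:[ω₂]²→ω₂ be a <ω-bounded coloring and let C₀⊆ω₂ be a closed f-rainbow set of order type ω₁. Then for every ordinal β with sup C₀ ≤ β < ω₂ there exists a set D⊆C₀, closed and cofinal in sup C₀, such that the map η ↦ f(η,β) is injective on D. -/
open Set Cardinal Ordinal

universe u

/-- If `f` is a `<ω`-bounded coloring on `[ω₂]²` and `C₀ ⊆ ω₂` is a closed `f`-rainbow
set of order type `ω₁`, then for every `β` with `sup C₀ ≤ β < ω₂` there is `D ⊆ C₀`,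
closed and cofinal in `sup C₀`, on which `η ↦ f η β` is injective. -/
theorem stmt13 (f : Ordinal → Ordinal → Ordinal)
    (hbd : FinBounded f (Cardinal.aleph 2).ord)
    (C₀ : Set Ordinal) (hsub : C₀ ⊆ Set.Iio (Cardinal.aleph 2).ord)
    (hclosed : IsClosedSet C₀) (hrainbow : IsRainbow f C₀)
    (htype : HasOType C₀ (Cardinal.aleph 1).ord) :
    ∀ β : Ordinal, sSup C₀ ≤ β → β < (Cardinal.aleph 2).ord →
      ∃ D : Set Ordinal, D ⊆ C₀ ∧ IsClosedSet D ∧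
        (∀ α : Ordinal, α < sSup C₀ → ∃ x ∈ D, α ≤ x) ∧
        Set.InjOn (fun η => f η β) D := by
  classical
  intro β hβ hβ2
  obtain ⟨e⟩ := htype
  -- initial segments of `C₀` are countable
  have hseg : ∀ x ∈ C₀, {c ∈ C₀ | c ≤ x}.Countable := by
    intro x hx
    have h1 : (Set.Iic (e.symm ⟨x, hx⟩).1).Countable := by
      have h2 := (e.symm ⟨x, hx⟩).2
      rw [Set.mem_Iio, Cardinal.lt_ord] at h2
      have h3 : (e.symm ⟨x, hx⟩).1.card ≤ ℵ₀ := by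
        rw [← Order.lt_succ_iff, Cardinal.succ_aleph0]; exact h2
      have h4 : (Set.Iio (e.symm ⟨x, hx⟩).1).Countable := by
        rw [← Cardinal.le_aleph0_iff_set_countable, Cardinal.mk_Iio_ordinal]
        exact Cardinal.lift_le_aleph0.2 h3
      rw [← Set.Iio_insert]
      exact h4.insert _
    have h5 : {c ∈ C₀ | c ≤ x} ⊆ Set.image (fun a : Ordinal =>
        if h : a ∈ Set.Iio (Cardinal.aleph 1).ord then (e ⟨a, h⟩).1 else 0)
        (Set.Iic (e.symm ⟨x, hx⟩).1) := by
      rintro c ⟨hc, hcx⟩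
      refine ⟨(e.symm ⟨c, hc⟩).1, ?_, ?_⟩
      · have : e.symm ⟨c, hc⟩ ≤ e.symm ⟨x, hx⟩ := e.symm.monotone hcx
        exact this
      · simp only [Subtype.coe_prop, dif_pos, Subtype.coe_eta, OrderIso.apply_symm_apply]
    exact (h1.image _).mono h5
  have hunc : ¬ C₀.Countable := by
    intro h
    have : Countable (Set.Iio (Cardinal.aleph 1).ord) := by
      have := h.to_subtype
      exact e.injective.countable
    have h2 : (Set.Iio (Cardinal.aleph 1).ord).Countable := this
    rw [← Cardinal.le_aleph0_iff_set_countable, Cardinal.mk_Iio_ordinal] at h2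
    simp at h2
  have hbound : ∀ T : Set Ordinal, T ⊆ C₀ → T.Countable → ∃ y ∈ C₀, ∀ t ∈ T, t < y := by
    intro T hT hTc
    by_contra! hcon
    apply hunc
    refine (hTc.biUnion (fun t ht => hseg t (hT ht))).mono ?_
    intro c hc
    obtain ⟨t, ht, hct⟩ := hcon c hc
    simp only [Set.mem_iUnion]
    exact ⟨t, ht, hc, hct⟩
  have hbdd : BddAbove C₀ := ⟨_, fun x hx => (hsub hx).le⟩
  have hlt : ∀ x ∈ C₀, x < sSup C₀ := by
    intro x hx
    obtain ⟨y, hy, hxy⟩ := hbound {x} (by simpa using hx) (by simp)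
    exact (hxy x rfl).trans_le (le_csSup hbdd hy)
  have hfin : ∀ ξ, {η ∈ C₀ | f η β = ξ}.Finite := by
    intro ξ
    refine ((hbd ξ).image Prod.fst).subset ?_
    rintro η ⟨hη, hf⟩
    exact ⟨(η, β), ⟨(hlt η hη).trans_le hβ, hβ2, hf⟩, rfl⟩
  have hnext : ∀ x : C₀, ∃ y : C₀, x.1 < y.1 ∧
      ∀ ξ ∈ C₀, ξ ≤ x.1 → ∀ ζ ∈ C₀, f ζ β = f ξ β → ζ < y.1 := by
    rintro ⟨x, hx⟩
    obtain ⟨y, hy, hxy⟩ := hbound (⋃ ξ ∈ {c ∈ C₀ | c ≤ x}, {η ∈ C₀ | f η β = f ξ β})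
      (by
        intro z hz
        simp only [Set.mem_iUnion] at hz
        obtain ⟨_, _, hz⟩ := hz
        exact hz.1)
      ((hseg x hx).biUnion (fun ξ _ => (hfin _).countable))
    have key : ∀ ξ ∈ C₀, ξ ≤ x → ∀ ζ ∈ C₀, f ζ β = f ξ β → ζ < y := by
      intro ξ hξ hle ζ hζ hf
      apply hxy
      simp only [Set.mem_iUnion]
      exact ⟨ξ, ⟨hξ, hle⟩, hζ, hf⟩
    exact ⟨⟨y, hy⟩, key x hx le_rfl x hx rfl, key⟩
  choose nx hnx1 hnx2 using hnext
  refine ⟨{η ∈ C₀ | ∀ ξ ∈ C₀, ξ < η → ∀ ζ ∈ C₀, f ζ β = f ξ β → ζ < η},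
    fun x hx => hx.1, ?_, ?_, ?_⟩
  · set D := {η ∈ C₀ | ∀ ξ ∈ C₀, ξ < η → ∀ ζ ∈ C₀, f ζ β = f ξ β → ζ < η} with hD
    intro α hα h0 hs
    have hDC : D ⊆ C₀ := fun x hx => hx.1
    have hne : D.Nonempty := by
      rw [Set.nonempty_iff_ne_empty]
      intro h
      rw [h] at hα
      simp at hα
    have hne2 : (D ∩ Set.Iio α).Nonempty := by
      rw [Set.nonempty_iff_ne_empty]
      intro h
      rw [h] at hs
      simp at hs
      exact h0 hs.symm
    have hb2 : BddAbove (C₀ ∩ Set.Iio α) := ⟨α, fun x hx => hx.2.le⟩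
    have hαC : α ∈ C₀ := by
      refine hclosed α (hα.trans_le (csSup_le_csSup hbdd hne hDC)) h0 (le_antisymm ?_ ?_)
      · exact csSup_le (hne2.mono (Set.inter_subset_inter_left _ hDC)) (fun x hx => hx.2.le)
      · calc α = sSup (D ∩ Set.Iio α) := hs.symm
          _ ≤ _ := csSup_le_csSup hb2 hne2 (Set.inter_subset_inter_left _ hDC)
    refine ⟨hαC, ?_⟩
    intro ξ hξ hξα ζ hζ hf
    rw [← hs] at hξα
    obtain ⟨d, hd, hξd⟩ := exists_lt_of_lt_csSup hne2 hξα
    exact (hd.1.2 ξ hξ hξd ζ hζ hf).trans hd.2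
  · intro α hα
    have hCne : C₀.Nonempty := by
      rw [Set.nonempty_iff_ne_empty]
      intro h
      rw [h] at hα
      simp at hα
    obtain ⟨x0, hx0, hαx0⟩ := exists_lt_of_lt_csSup hCne hα
    let s : ℕ → C₀ := fun n => nx^[n] ⟨x0, hx0⟩
    have hs1 : ∀ n, s (n + 1) = nx (s n) := fun n => Function.iterate_succ_apply' _ _ _
    let R : Set Ordinal := Set.range (fun n => (s n).1)
    have hRC : R ⊆ C₀ := by
      rintro _ ⟨n, rfl⟩
      exact (s n).2
    have hRne : R.Nonempty := Set.range_nonempty _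
    have hRb : BddAbove R := hbdd.mono hRC
    have hRlt : ∀ n, (s n).1 < sSup R := by
      intro n
      have := hnx1 (s n)
      rw [← hs1] at this
      exact this.trans_le (le_csSup hRb ⟨n + 1, rfl⟩)
    obtain ⟨y, hy, hRy⟩ := hbound R hRC (Set.countable_range _)
    have hsup : sSup R < sSup C₀ :=
      (csSup_le hRne (fun t ht => (hRy t ht).le)).trans_lt (hlt y hy)
    have hmem : sSup R ∈ C₀ := by
      have hsubR : R ⊆ C₀ ∩ Set.Iio (sSup R) := by
        rintro _ ⟨n, rfl⟩
        exact ⟨(s n).2, hRlt n⟩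
      refine hclosed _ hsup (ne_bot_of_gt (hRlt 0)) (le_antisymm ?_ ?_)
      · exact csSup_le (hRne.mono hsubR) (fun x hx => hx.2.le)
      · exact csSup_le_csSup ⟨sSup R, fun x hx => hx.2.le⟩ hRne hsubR
    refine ⟨sSup R, ⟨hmem, ?_⟩, hαx0.le.trans (hRlt 0).le⟩
    intro ξ hξ hξR ζ hζ hf
    obtain ⟨_, ⟨n, rfl⟩, hn⟩ := exists_lt_of_lt_csSup hRne hξR
    have := hnx2 (s n) ξ hξ hn.le ζ hζ hf
    rw [← hs1] at this
    exact this.trans (hRlt _)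
  · intro a ha b hb hab
    rcases lt_trichotomy a b with h | h | h
    · exact absurd (hb.2 a ha.1 h b hb.1 hab.symm) (lt_irrefl _)
    · exact h
    · exact absurd (ha.2 b hb.1 h a ha.1 hab) (lt_irrefl _)
end
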